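/- arXiv:1603.04246 — 3 statements merged into one kernel-verified Lean document; each statement's English description precedes it below -/
import Mathlib

section
/- Let g: ℝ⁸ → ℝ be a Schwartz function with g(x) ≤ 0 for all ‖x‖ ≥ √2, ĝ(x) ≥ 0 for all x ∈ ℝ⁸, and g(0) = ĝ(0) = 1. Then g(ℓ) = 0 and ĝ(ℓ) = 0 for every ℓ ∈ Λ8 ∖ {0}. -/
open MeasureTheory FourierTransform

/-- The `E₈`-lattice `Λ₈ = {x ∈ ℤ⁸ ∪ (ℤ+1/2)⁸ : ∑ xᵢ ≡ 0 (mod 2)}` as a subset of `ℝ⁸`. -/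
def Lambda8 : Set (EuclideanSpace ℝ (Fin 8)) :=
  {x | ((∀ i, ∃ n : ℤ, x i = (n : ℝ)) ∨ (∀ i, ∃ n : ℤ, x i = (n : ℝ) + 1/2)) ∧
    ∃ m : ℤ, ∑ i, x i = 2 * (m : ℝ)}

/-!
The lattice `Λ₈` is even, so its nonzero vectors have length at least `√2`, and self-dual, so its
covolume is `1`. Poisson summation then gives `1 = g(0) ≥ ∑ g(ℓ) = ∑ ĝ(ℓ) ≥ ĝ(0) = 1`, since the
terms with `ℓ ≠ 0` are nonpositive on the left and nonnegative on the right. Equality holds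
throughout, so every term with `ℓ ≠ 0` vanishes.

Poisson summation over a lattice `L` is the pointwise convergence of the Fourier series of the
periodisation `x ↦ ∑ₗ f(l + x)`, read on the standard torus through the coordinates in a basis
of `L`; the `m`-th Fourier coefficient is then `𝓕 f` at the dual lattice vector with coordinates
`m` in the dual basis, divided by the covolume.
-/

open Module Asymptotics Submodule
open scoped RealInnerProductSpace

section Decay

variable {V E : Type*} [NormedAddCommGroup V] [NormedAddCommGroup E]

theorem one_add_norm_rpow_neg_le_mul {b R : ℝ} (hb : 0 ≤ b) {x v : V} (hx : ‖x‖ ≤ R) :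
    (1 + ‖v + x‖) ^ (-b) ≤ (1 + R) ^ b * (1 + ‖v‖) ^ (-b) := by
  have hR : 0 ≤ R := (norm_nonneg x).trans hx
  have hv : 1 + ‖v‖ ≤ (1 + R) * (1 + ‖v + x‖) := by
    nlinarith [norm_le_add_norm_add v x, norm_nonneg (v + x)]
  rw [Real.rpow_neg (by positivity), Real.rpow_neg (by positivity), ← div_eq_mul_inv,
    le_div_iff₀ (by positivity), inv_mul_le_iff₀ (by positivity), mul_comm,
    ← Real.mul_rpow (by positivity) (by positivity)]
  gcongr

variable [NormedSpace ℝ V] [FiniteDimensional ℝ V]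

theorem integrable_of_isBigO_one_add_norm_rpow [MeasurableSpace V] [BorelSpace V] {μ : Measure V}
    [μ.IsAddHaarMeasure] {f : V → E} {b : ℝ} (hf : Continuous f) (hb : (finrank ℝ V : ℝ) < b)
    (hfb : f =O[⊤] fun x ↦ (1 + ‖x‖) ^ (-b)) : Integrable f μ := by
  obtain ⟨C, hC⟩ := isBigO_top.1 hfb
  exact ((integrable_one_add_norm hb).norm.const_mul C).mono' hf.aestronglyMeasurable
    (.of_forall hC)

variable (L : Submodule ℤ V) [DiscreteTopology L] [IsZLattice ℝ L]

theorem summable_one_add_norm_rpow {b : ℝ} (hb : (finrank ℝ V : ℝ) < b) :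
    Summable fun l : L ↦ (1 + ‖(l : V)‖) ^ (-b) := by
  have hrank : -b < -finrank ℤ L := by rw [ZLattice.rank ℝ L]; linarith
  refine .of_norm_bounded_eventually (ZLattice.summable_norm_rpow L (-b) hrank) ?_
  filter_upwards [(Set.finite_singleton (0 : L)).compl_mem_cofinite] with l hl
  have hl : 0 < ‖(l : V)‖ := by simpa using hl
  rw [Real.norm_of_nonneg (by positivity)]
  exact Real.rpow_le_rpow_of_nonpos hl (by simp) (by linarith [(finrank ℝ V).cast_nonneg (α := ℝ)])

variable [CompleteSpace E] {f : V → E} {b : ℝ}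

theorem summable_of_isBigO_one_add_norm_rpow (hb : (finrank ℝ V : ℝ) < b)
    (hfb : f =O[⊤] fun x ↦ (1 + ‖x‖) ^ (-b)) : Summable fun l : L ↦ f l :=
  summable_of_isBigO (summable_one_add_norm_rpow L hb)
    ((hfb.comp_tendsto (k := Subtype.val) Filter.tendsto_top).mono le_top)

theorem continuous_tsum_vadd_of_isBigO_one_add_norm_rpow (hf : Continuous f)
    (hb : (finrank ℝ V : ℝ) < b) (hfb : f =O[⊤] fun x ↦ (1 + ‖x‖) ^ (-b)) :
    Continuous fun x ↦ ∑' l : L, f (l +ᵥ x) := by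
  obtain ⟨C, hC⟩ := isBigO_top.1 hfb
  have hb₀ : 0 ≤ b := by linarith [(finrank ℝ V).cast_nonneg (α := ℝ)]
  refine continuous_iff_continuousAt.2 fun x ↦ ContinuousOn.continuousAt ?_
    (Metric.ball_mem_nhds x one_pos)
  refine continuousOn_tsum (fun l ↦ by fun_prop)
    ((summable_one_add_norm_rpow L hb).mul_left (|C| * (1 + (‖x‖ + 1)) ^ b)) fun l y hy ↦ ?_
  have hy : ‖y‖ ≤ ‖x‖ + 1 := by
    linarith [norm_le_norm_add_norm_sub x y, mem_ball_iff_norm.1 hy, norm_sub_rev x y]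
  calc ‖f (l + y)‖ ≤ |C| * (1 + ‖l + y‖) ^ (-b) := by
        refine (hC _).trans ?_
        rw [Real.norm_of_nonneg (by positivity)]
        gcongr
        exact le_abs_self C
    _ ≤ |C| * ((1 + (‖x‖ + 1)) ^ b * (1 + ‖(l : V)‖) ^ (-b)) := by
        gcongr
        exact one_add_norm_rpow_neg_le_mul hb₀ hy
    _ = |C| * (1 + (‖x‖ + 1)) ^ b * (1 + ‖(l : V)‖) ^ (-b) := by ring

end Decay

section Schwartz

theorem schwartzMap_isBigO_one_add_norm_rpow {V E : Type*} [NormedAddCommGroup V]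
    [NormedSpace ℝ V] [NormedAddCommGroup E] [NormedSpace ℝ E] (f : SchwartzMap V E)
    (k : ℕ) : f =O[⊤] fun x ↦ (1 + ‖x‖) ^ (-k : ℝ) := by
  refine isBigO_top.2
    ⟨2 ^ k * (Finset.Iic (k, 0)).sup (fun m ↦ SchwartzMap.seminorm ℝ m.1 m.2) f, fun x ↦ ?_⟩
  have hx := SchwartzMap.one_add_le_sup_seminorm_apply (𝕜 := ℝ) (m := (k, 0)) le_rfl le_rfl f x
  rwa [Real.norm_of_nonneg (by positivity), Real.rpow_neg (by positivity), Real.rpow_natCast,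
    ← div_eq_mul_inv, le_div_iff₀' (by positivity), ← norm_iteratedFDeriv_zero (𝕜 := ℝ)]

theorem schwartzMap_summable_fourier_ofReal {V : Type*} [NormedAddCommGroup V]
    [InnerProductSpace ℝ V] [FiniteDimensional ℝ V] [MeasurableSpace V] [BorelSpace V]
    (g : SchwartzMap V ℝ) (L : Submodule ℤ V) [DiscreteTopology L] [IsZLattice ℝ L] :
    Summable fun y : L ↦ 𝓕 (fun x ↦ (g x : ℂ)) y :=
  summable_of_isBigO_one_add_norm_rpow L (mod_cast Nat.lt_succ_self _)
    (schwartzMap_isBigO_one_add_norm_rpow (𝓕 (g.postcompCLM Complex.ofRealCLM)) (finrank ℝ V + 1))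

end Schwartz

section TorusCoordinates

variable {ι V : Type*} [NormedAddCommGroup V]

section NormedSpace

variable [NormedSpace ℝ V] (B : Basis ι ℝ V)

/-- The coordinates of `x` in the basis `B`, taken modulo `1`: the covering map from `V` onto its
quotient by the lattice spanned by `B`, the quotient being identified with the standard torus. -/
noncomputable def basisToTorus (x : V) : UnitAddTorus ι :=
  fun i ↦ (B.repr x i : UnitAddCircle)

theorem basisToTorus_eq_iff {x y : V} :
    basisToTorus B x = basisToTorus B y ↔ y - x ∈ span ℤ (Set.range B) := by
  rw [Basis.mem_span_iff_repr_mem, funext_iff]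
  refine forall_congr' fun i ↦ ?_
  rw [basisToTorus, basisToTorus, eq_comm, ← sub_eq_zero, ← AddCircle.coe_sub,
    AddCircle.coe_eq_zero_iff]
  simp

theorem isOpenQuotientMap_basisToTorus [Finite ι] : IsOpenQuotientMap (basisToTorus B) :=
  (IsOpenQuotientMap.piMap fun _ ↦ QuotientAddGroup.isOpenQuotientMap_mk).comp
    B.equivFunL.toHomeomorph.isOpenQuotientMap

theorem exists_continuousMap_comp_basisToTorus [Finite ι] {Z : Type*} [TopologicalSpace Z]
    {P : V → Z} (hP : Continuous P) (hper : ∀ v ∈ span ℤ (Set.range B), ∀ x, P (v + x) = P x) :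
    ∃ F : C(UnitAddTorus ι, Z), ∀ x, F (basisToTorus B x) = P x := by
  have hq := (isOpenQuotientMap_basisToTorus B).isQuotientMap
  have hfac : Function.FactorsThrough P (basisToTorus B) := fun x y hxy ↦ by
    simpa using (hper _ ((basisToTorus_eq_iff B).1 hxy) x).symm
  exact ⟨hq.lift (f := ⟨_, hq.continuous⟩) ⟨P, hP⟩ hfac,
    DFunLike.congr_fun (hq.lift_comp (f := ⟨_, hq.continuous⟩) ⟨P, hP⟩ hfac)⟩

end NormedSpace

variable [Fintype ι]

theorem setIntegral_pi_Ioc_eq_Ico {E : Type*} [NormedAddCommGroup E] [NormedSpace ℝ E]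
    (h : (ι → ℝ) → E) (a b : ι → ℝ) :
    ∫ t in {t | ∀ i, t i ∈ Set.Ioc (a i) (b i)}, h t =
      ∫ t in {t | ∀ i, t i ∈ Set.Ico (a i) (b i)}, h t := by
  refine setIntegral_congr_set ?_
  have hae := (Measure.univ_pi_Ioc_ae_eq_Icc (μ := fun _ : ι ↦ (volume : Measure ℝ))
    (f := a) (g := b)).trans Measure.univ_pi_Ico_ae_eq_Icc.symm
  simpa [Set.pi] using! hae

variable [InnerProductSpace ℝ V] [FiniteDimensional ℝ V] [MeasurableSpace V] [BorelSpace V]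
  (L : Submodule ℤ V) [DiscreteTopology L] [IsZLattice ℝ L] (b : Basis ι ℤ L)

theorem map_equivFun_volume :
    Measure.map (b.ofZLatticeBasis ℝ L).equivFun volume =
      ENNReal.ofReal (ZLattice.covolume L) • (volume : Measure (ι → ℝ)) := by
  set B := b.ofZLatticeBasis ℝ L
  have hB : Measurable B.equivFun := B.equivFunL.continuous.measurable
  ext s hs
  have hvol := ZLattice.volume_image_eq_volume_div_covolume' L b (hB hs).nullMeasurableSet
  rw [Set.image_preimage_eq _ B.equivFun.surjective] at hvol
  rw [Measure.map_apply hB hs, Measure.smul_apply, hvol, smul_eq_mul,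
    ENNReal.mul_div_cancel (by simpa using ZLattice.covolume_pos L) (by simp)]

theorem covolume_smul_mFourierCoeff {E : Type*} [NormedAddCommGroup E] [NormedSpace ℂ E]
    (F : UnitAddTorus ι → E) (m : ι → ℤ) :
    ZLattice.covolume L • UnitAddTorus.mFourierCoeff F m =
      ∫ x in ZSpan.fundamentalDomain (b.ofZLatticeBasis ℝ L),
        UnitAddTorus.mFourier (-m) (basisToTorus (b.ofZLatticeBasis ℝ L) x) •
          F (basisToTorus (b.ofZLatticeBasis ℝ L) x) := by
  set B := b.ofZLatticeBasis ℝ L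
  have hcov : 0 ≤ ZLattice.covolume L := (ZLattice.covolume_pos L).le
  have hB : MeasurableEmbedding B.equivFun := B.equivFunL.toHomeomorph.measurableEmbedding
  rw [UnitAddTorus.mFourierCoeff_eq_integral F m 0]
  simp only [Pi.zero_apply, zero_add]
  rw [setIntegral_pi_Ioc_eq_Ico, ← ENNReal.toReal_ofReal hcov, ← integral_smul_measure,
    ← Measure.restrict_smul, ← map_equivFun_volume L b, hB.setIntegral_map]
  rfl

end TorusCoordinates

section DualLattice

variable {V : Type*} [NormedAddCommGroup V] [InnerProductSpace ℝ V]

theorem nondegenerate_innerₗ : LinearMap.BilinForm.Nondegenerate (innerₗ V) :=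
  ⟨fun x hx ↦ inner_self_eq_zero.1 (hx x), fun x hx ↦ inner_self_eq_zero.1 (hx x)⟩

/-- The dual lattice of `L`: the vectors whose inner products with all vectors of `L` are
integers. It indexes the Fourier side of Poisson summation over `L`. -/
noncomputable def dualLattice (L : Submodule ℤ V) : Submodule ℤ V :=
  LinearMap.BilinForm.dualSubmodule (innerₗ V) L

theorem mem_dualLattice {L : Submodule ℤ V} {y : V} :
    y ∈ dualLattice L ↔ ∀ x ∈ L, ∃ n : ℤ, ⟪y, x⟫ = n := by
  simp [dualLattice, LinearMap.BilinForm.mem_dualSubmodule, Submodule.mem_one, eq_comm]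

variable [FiniteDimensional ℝ V] (L : Submodule ℤ V) [DiscreteTopology L] [IsZLattice ℝ L]

theorem dualLattice_eq_span_dualBasis {ι : Type*} [Finite ι] [DecidableEq ι] (b : Basis ι ℤ L) :
    dualLattice L = span ℤ (Set.range
      (LinearMap.BilinForm.dualBasis (innerₗ V) nondegenerate_innerₗ (b.ofZLatticeBasis ℝ L))) := by
  rw [← LinearMap.BilinForm.dualSubmodule_span_of_basis, b.ofZLatticeBasis_span ℝ, dualLattice]

instance : DiscreteTopology (dualLattice L) := by
  classical
  rw [dualLattice_eq_span_dualBasis L (Free.chooseBasis ℤ L)]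
  infer_instance

instance : IsZLattice ℝ (dualLattice L) := by
  classical
  simp_rw [dualLattice_eq_span_dualBasis L (Free.chooseBasis ℤ L)]
  infer_instance

section Basis

variable {ι : Type*} [Fintype ι] [DecidableEq ι] (b : Basis ι ℤ L)

/-- The `ℤ`-basis of the dual lattice that is dual to the `ℤ`-basis `b` of `L`. -/
noncomputable def dualLatticeBasis : Basis ι ℤ (dualLattice L) :=
  (Basis.restrictScalars ℤ (LinearMap.BilinForm.dualBasis (innerₗ V) nondegenerate_innerₗ
    (b.ofZLatticeBasis ℝ L))).map (LinearEquiv.ofEq _ _ (dualLattice_eq_span_dualBasis L b).symm)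

theorem inner_dualLatticeBasis (i j : ι) :
    ⟪(dualLatticeBasis L b i : V), (b j : V)⟫ = if j = i then 1 else 0 := by
  simpa [dualLatticeBasis] using
    LinearMap.BilinForm.apply_dualBasis_left nondegenerate_innerₗ (b.ofZLatticeBasis ℝ L) i j

theorem dualLatticeBasis_repr_apply (y : dualLattice L) (i : ι) :
    ((dualLatticeBasis L b).repr y i : ℝ) = ⟪(y : V), (b i : V)⟫ := by
  have hrepr := LinearMap.BilinForm.dualBasis_repr_apply nondegenerate_innerₗ
    (b.ofZLatticeBasis ℝ L) y i
  rw [innerₗ_apply_apply, b.ofZLatticeBasis_apply ℝ] at hrepr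
  rw [← hrepr]
  exact Basis.restrictScalars_repr_apply ℤ _ _ i

theorem mFourier_dualLatticeBasis_repr (y : dualLattice L) (x : V) :
    UnitAddTorus.mFourier ((dualLatticeBasis L b).repr y)
      (basisToTorus (b.ofZLatticeBasis ℝ L) x) = 𝐞 ⟪(y : V), x⟫ := by
  set B := b.ofZLatticeBasis ℝ L
  have hyx : ⟪(y : V), x⟫ = ∑ i, ((dualLatticeBasis L b).repr y i : ℝ) * B.repr x i := by
    conv_lhs => rw [← B.sum_repr x, inner_sum]
    refine Finset.sum_congr rfl fun i _ ↦ ?_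
    rw [real_inner_smul_right, dualLatticeBasis_repr_apply, mul_comm, b.ofZLatticeBasis_apply ℝ]
  simp only [UnitAddTorus.mFourier, basisToTorus, ContinuousMap.coe_mk, fourier_coe_apply,
    ← Complex.exp_sum, Real.fourierChar_apply, hyx]
  push_cast
  simp only [Finset.mul_sum, Finset.sum_mul]
  congr! 2 with i
  ring

end Basis

variable [MeasurableSpace V] [BorelSpace V]

theorem covolume_mul_covolume_dualLattice :
    ZLattice.covolume L * ZLattice.covolume (dualLattice L) = 1 := by
  classical
  let b := Free.chooseBasis ℤ L
  have hι : finrank ℝ V = Fintype.card (Free.ChooseBasisIndex ℤ L) := by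
    rw [← ZLattice.rank ℝ L, finrank_eq_card_chooseBasisIndex]
  let b₀ := (stdOrthonormalBasis ℝ V).reindex ((finCongr hι).trans (Fintype.equivFin _).symm)
  have hb₀ : volume.real (ZSpan.fundamentalDomain b₀.toBasis) = 1 := by
    rw [measureReal_def, measure_congr (ZSpan.fundamentalDomain_ae_parallelepiped _ _),
      b₀.coe_toBasis, b₀.volume_parallelepiped, ENNReal.toReal_one]
  have hgram : (b₀.toBasis.toMatrix (Subtype.val ∘ dualLatticeBasis L b)).transpose *
      b₀.toBasis.toMatrix (Subtype.val ∘ b) = 1 := by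
    ext i j
    simp only [Matrix.mul_apply, Matrix.transpose_apply, Basis.toMatrix_apply, Function.comp_apply,
      OrthonormalBasis.coe_toBasis_repr_apply, OrthonormalBasis.repr_apply_apply, Matrix.one_apply]
    simp_rw [eq_comm (a := i), ← inner_dualLatticeBasis L b i j,
      real_inner_comm (dualLatticeBasis L b i : V) (b₀ _)]
    exact b₀.sum_inner_mul_inner _ _
  rw [ZLattice.covolume_eq_det_mul_measureReal _ _ b b₀.toBasis,
    ZLattice.covolume_eq_det_mul_measureReal _ _ (dualLatticeBasis L b) b₀.toBasis,
    hb₀, mul_one, mul_one, ← abs_mul, mul_comm, Basis.det_apply, Basis.det_apply,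
    ← Matrix.det_transpose, ← Matrix.det_mul, hgram, Matrix.det_one, abs_one]

theorem covolume_eq_one_of_dualLattice_eq (h : dualLattice L = L) : ZLattice.covolume L = 1 := by
  have hmul := covolume_mul_covolume_dualLattice L
  simp_rw [h] at hmul
  nlinarith [ZLattice.covolume_pos L]

end DualLattice

section Poisson

theorem integral_eq_setIntegral_tsum_vadd {G α E : Type*} [AddGroup G] [Countable G]
    [AddAction G α] [MeasurableSpace α] [MeasurableConstVAdd G α] {μ : Measure α}
    [VAddInvariantMeasure G α μ] [NormedAddCommGroup E] [NormedSpace ℝ E] {s : Set α}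
    (hs : IsAddFundamentalDomain G s μ) {f : α → E} (hf : Integrable f μ) :
    ∫ x, f x ∂μ = ∫ x in s, ∑' γ : G, f (γ +ᵥ x) ∂μ := by
  rw [hs.integral_eq_tsum'' f hf, integral_tsum]
  · exact fun γ ↦ (hf.1.comp_quasiMeasurePreserving
      (measurePreserving_vadd γ μ).quasiMeasurePreserving).restrict
  · rw [← hs.lintegral_eq_tsum'' (‖f ·‖ₑ)]
    exact hf.2.ne

theorem fourierChar_intCast (n : ℤ) : 𝐞 (n : ℝ) = 1 := by
  ext
  rw [Real.fourierChar_apply, Circle.coe_one, Complex.exp_eq_one_iff]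
  exact ⟨n, by push_cast; ring⟩

variable {V : Type*} [NormedAddCommGroup V] [InnerProductSpace ℝ V] [FiniteDimensional ℝ V]
  [MeasurableSpace V] [BorelSpace V] (L : Submodule ℤ V) [DiscreteTopology L] [IsZLattice ℝ L]

theorem covolume_smul_mFourierCoeff_eq_fourier {ι E : Type*} [Fintype ι] [DecidableEq ι]
    [NormedAddCommGroup E] [NormedSpace ℂ E] (b : Basis ι ℤ L) {f : V → E} (hf : Integrable f)
    {F : UnitAddTorus ι → E}
    (hF : ∀ x, F (basisToTorus (b.ofZLatticeBasis ℝ L) x) = ∑' l : L, f (l +ᵥ x))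
    (y : dualLattice L) :
    ZLattice.covolume L • UnitAddTorus.mFourierCoeff F ((dualLatticeBasis L b).repr y) =
      𝓕 f y := by
  have : MeasurableVAdd L V := inferInstanceAs (MeasurableVAdd L.toAddSubgroup V)
  have : VAddInvariantMeasure L V volume :=
    inferInstanceAs (VAddInvariantMeasure L.toAddSubgroup V volume)
  have hchar (l : L) (x : V) : 𝐞 (-⟪l +ᵥ x, (y : V)⟫) = 𝐞 (-⟪x, (y : V)⟫) := by
    obtain ⟨n, hn⟩ := mem_dualLattice.1 y.2 l l.2
    rw [Submodule.vadd_def, vadd_eq_add, inner_add_left, neg_add, AddChar.map_add_eq_mul,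
      real_inner_comm, hn, ← Int.cast_neg, fourierChar_intCast, one_mul]
  have hint : Integrable fun x ↦ 𝐞 (-⟪x, (y : V)⟫) • f x :=
    (Real.fourierIntegral_convergent_iff _).2 hf
  rw [covolume_smul_mFourierCoeff, Real.fourier_eq, integral_eq_setIntegral_tsum_vadd
    (ZLattice.isAddFundamentalDomain b volume) hint]
  congr with x
  simp_rw [hF, hchar, ← Finsupp.coe_neg, ← map_neg, mFourier_dualLatticeBasis_repr,
    Circle.smul_def]
  rw [tsum_const_smul'', Submodule.coe_neg, inner_neg_left, real_inner_comm]

theorem hasSum_fourier_dualLattice {f : V → ℂ} (hf : Integrable f)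
    (hcont : Continuous fun x ↦ ∑' l : L, f (l +ᵥ x))
    (hsum : Summable fun y : dualLattice L ↦ 𝓕 f y) (x : V) :
    HasSum (fun y : dualLattice L ↦ 𝐞 ⟪(y : V), x⟫ • 𝓕 f y)
      (ZLattice.covolume L * ∑' l : L, f (l +ᵥ x)) := by
  classical
  let b := Free.chooseBasis ℤ L
  have hper : ∀ v ∈ span ℤ (Set.range (b.ofZLatticeBasis ℝ L)), ∀ x,
      ∑' l : L, f (l +ᵥ (v + x)) = ∑' l : L, f (l +ᵥ x) := by
    intro v hv x
    rw [b.ofZLatticeBasis_span ℝ] at hv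
    rw [← (Equiv.addRight (⟨v, hv⟩ : L)).tsum_eq fun l ↦ f (l +ᵥ x)]
    simp [Submodule.vadd_def, add_assoc]
  obtain ⟨F, hF⟩ := exists_continuousMap_comp_basisToTorus _ hcont hper
  have hcoeff := covolume_smul_mFourierCoeff_eq_fourier L b hf hF
  let e : dualLattice L ≃ (Free.ChooseBasisIndex ℤ L → ℤ) := (dualLatticeBasis L b).equivFun.toEquiv
  have hcov : ZLattice.covolume L ≠ 0 := ZLattice.covolume_ne_zero L
  have hsumF : Summable (UnitAddTorus.mFourierCoeff F) := by
    refine e.summable_iff.1 ((hsum.const_smul (ZLattice.covolume L)⁻¹).congr fun y ↦ ?_)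
    rw [← hcoeff, inv_smul_smul₀ hcov]
    rfl
  have hseries := (UnitAddTorus.hasSum_mFourier_series_apply_of_summable hsumF
    (basisToTorus (b.ofZLatticeBasis ℝ L) x)).const_smul (ZLattice.covolume L)
  rw [hF, ← e.hasSum_iff, Complex.real_smul] at hseries
  convert hseries using 2 with y
  have he : e y = (dualLatticeBasis L b).repr y := rfl
  rw [Function.comp_apply, ← smul_assoc, he, hcoeff, mFourier_dualLatticeBasis_repr,
    Circle.smul_def, smul_eq_mul, smul_eq_mul, mul_comm]

theorem tsum_fourier_dualLattice {f : V → ℂ} {b : ℝ} (hf : Continuous f)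
    (hb : (finrank ℝ V : ℝ) < b) (hfb : f =O[⊤] fun x ↦ (1 + ‖x‖) ^ (-b))
    (hsum : Summable fun y : dualLattice L ↦ 𝓕 f y) :
    ∑' y : dualLattice L, 𝓕 f y = ZLattice.covolume L * ∑' l : L, f l := by
  simpa [Submodule.vadd_def] using (hasSum_fourier_dualLattice L
    (integrable_of_isBigO_one_add_norm_rpow hf hb hfb)
    (continuous_tsum_vadd_of_isBigO_one_add_norm_rpow L hf hb hfb) hsum 0).tsum_eq

end Poisson

section EvenLattice

variable {V : Type*} [NormedAddCommGroup V]

/-- An even lattice: all squared norms are even integers. This is what bounds the shortest nonzero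
vectors of `Λ₈` and makes its inner products integral. Discreteness is not part of the definition:
it is a consequence. -/
def IsEvenLattice (L : Submodule ℤ V) : Prop :=
  ∀ x ∈ L, ∃ k : ℤ, ‖x‖ ^ 2 = 2 * k

namespace IsEvenLattice

variable {L : Submodule ℤ V}

theorem sqrt_two_le_norm (hL : IsEvenLattice L) {x : V} (hx : x ∈ L) (hx₀ : x ≠ 0) :
    √2 ≤ ‖x‖ := by
  obtain ⟨k, hk⟩ := hL x hx
  have hk₀ : (0 : ℝ) < k := by linarith [pow_pos (norm_pos_iff.2 hx₀) 2]
  have hk₁ : (1 : ℝ) ≤ k := by exact_mod_cast Int.cast_pos.1 hk₀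
  exact Real.sqrt_le_iff.2 ⟨norm_nonneg x, by linarith⟩

theorem discreteTopology (hL : IsEvenLattice L) : DiscreteTopology L :=
  .of_forall_le_norm (Real.sqrt_pos.2 two_pos) fun x hx ↦
    hL.sqrt_two_le_norm x.2 fun h ↦ hx (Subtype.ext h)

theorem le_dualLattice [InnerProductSpace ℝ V] (hL : IsEvenLattice L) : L ≤ dualLattice L := by
  refine fun x hx ↦ mem_dualLattice.2 fun y hy ↦ ?_
  obtain ⟨k, hk⟩ := hL (x + y) (add_mem hx hy)
  obtain ⟨m, hm⟩ := hL x hx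
  obtain ⟨n, hn⟩ := hL y hy
  refine ⟨k - m - n, ?_⟩
  rw [real_inner_eq_norm_add_mul_self_sub_norm_mul_self_sub_norm_mul_self_div_two]
  push_cast
  linarith

end IsEvenLattice

end EvenLattice

section E8

theorem mem_Lambda8_iff {x : EuclideanSpace ℝ (Fin 8)} :
    x ∈ Lambda8 ↔ (∀ i j, ∃ n : ℤ, x i + x j = n) ∧ ∃ m : ℤ, ∑ i, x i = 2 * (m : ℝ) := by
  refine and_congr_left fun _ ↦ ⟨?_, fun h ↦ ?_⟩
  · rintro (h | h) i j <;> obtain ⟨⟨m, hm⟩, n, hn⟩ := And.intro (h i) (h j)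
    · exact ⟨m + n, by rw [hm, hn, Int.cast_add]⟩
    · exact ⟨m + n + 1, by rw [hm, hn]; push_cast; ring⟩
  · obtain ⟨k, hk⟩ := h 0 0
    choose n hn using h 0
    obtain ⟨c, rfl | rfl⟩ := k.even_or_odd'
    · exact .inl fun i ↦ ⟨n i - c, by push_cast at hk ⊢; linarith [hn i]⟩
    · exact .inr fun i ↦ ⟨n i - c - 1, by push_cast at hk ⊢; linarith [hn i]⟩

/-- The set `Lambda8` as a subgroup of `ℝ⁸`, so that the theory of `ℤ`-lattices applies to it. -/
def e8Lattice : Submodule ℤ (EuclideanSpace ℝ (Fin 8)) :=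
  AddSubgroup.toIntSubmodule
  { carrier := Lambda8
    zero_mem' := mem_Lambda8_iff.2 ⟨fun _ _ ↦ ⟨0, by simp⟩, 0, by simp⟩
    add_mem' := by
      intro x y hx hy
      obtain ⟨hx, m, hm⟩ := mem_Lambda8_iff.1 hx
      obtain ⟨hy, n, hn⟩ := mem_Lambda8_iff.1 hy
      refine mem_Lambda8_iff.2 ⟨fun i j ↦ ?_, m + n, ?_⟩
      · obtain ⟨⟨k, hk⟩, l, hl⟩ := And.intro (hx i j) (hy i j)
        exact ⟨k + l, by simp only [PiLp.add_apply]; push_cast; linarith⟩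
      · simp only [PiLp.add_apply, Finset.sum_add_distrib]
        push_cast
        linarith
    neg_mem' := by
      intro x hx
      obtain ⟨hx, m, hm⟩ := mem_Lambda8_iff.1 hx
      refine mem_Lambda8_iff.2 ⟨fun i j ↦ ?_, -m, ?_⟩
      · obtain ⟨n, hn⟩ := hx i j
        exact ⟨-n, by simp only [PiLp.neg_apply]; push_cast; linarith⟩
      · simp only [PiLp.neg_apply, Finset.sum_neg_distrib, hm]
        push_cast
        ring }

theorem isEvenLattice_e8Lattice : IsEvenLattice e8Lattice := by
  rintro x ⟨hx | hx, m, hm⟩ <;> choose n hn using hx <;> rw [EuclideanSpace.real_norm_sq_eq]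
  · obtain ⟨k, hk⟩ : (2 : ℤ) ∣ ∑ i, n i * (n i - 1) :=
      Finset.dvd_sum fun i _ ↦ (Int.even_mul_pred_self (n i)).two_dvd
    have hk : ∑ i, x i ^ 2 - ∑ i, x i = 2 * k := by
      rw [← Finset.sum_sub_distrib]
      calc ∑ i, (x i ^ 2 - x i) = ((∑ i, n i * (n i - 1) : ℤ) : ℝ) := by
            push_cast
            exact Finset.sum_congr rfl fun i _ ↦ by rw [hn]; ring
        _ = 2 * k := by rw [hk]; push_cast; rfl
    exact ⟨k + m, by push_cast; linarith⟩
  · obtain ⟨k, hk⟩ : (2 : ℤ) ∣ ∑ i, n i * (n i + 1) :=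
      Finset.dvd_sum fun i _ ↦ (Int.even_mul_succ_self (n i)).two_dvd
    refine ⟨k + 1, ?_⟩
    calc ∑ i, x i ^ 2 = ∑ i, (((n i * (n i + 1) : ℤ) : ℝ) + 1 / 4) :=
          Finset.sum_congr rfl fun i _ ↦ by rw [hn]; push_cast; ring
      _ = 2 * ((k + 1 : ℤ) : ℝ) := by
          rw [Finset.sum_add_distrib, ← Int.cast_sum, hk]
          norm_num
          ring

theorem single_add_single_mem_e8Lattice (i j : Fin 8) :
    EuclideanSpace.single i (1 : ℝ) + EuclideanSpace.single j 1 ∈ e8Lattice := by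
  refine ⟨.inl fun k ↦ ⟨(if k = i then 1 else 0) + if k = j then 1 else 0, ?_⟩, 1, ?_⟩
  · simp
  · simp [Finset.sum_add_distrib, one_add_one_eq_two]

theorem toLp_one_half_mem_e8Lattice :
    (WithLp.toLp 2 fun _ ↦ 1 / 2 : EuclideanSpace ℝ (Fin 8)) ∈ e8Lattice :=
  ⟨.inr fun _ ↦ ⟨0, by simp⟩, 2, by norm_num⟩

theorem dualLattice_e8Lattice : dualLattice e8Lattice = e8Lattice := by
  refine le_antisymm (fun y hy ↦ mem_Lambda8_iff.2 ⟨fun i j ↦ ?_, ?_⟩)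
    isEvenLattice_e8Lattice.le_dualLattice
  · simpa [inner_add_right, EuclideanSpace.inner_single_right] using
      mem_dualLattice.1 hy _ (single_add_single_mem_e8Lattice i j)
  · obtain ⟨m, hm⟩ := mem_dualLattice.1 hy _ toLp_one_half_mem_e8Lattice
    simp only [PiLp.inner_apply, RCLike.inner_apply, conj_trivial, ← Finset.mul_sum] at hm
    exact ⟨m, by linarith⟩

instance : DiscreteTopology e8Lattice :=
  isEvenLattice_e8Lattice.discreteTopology

instance : IsZLattice ℝ e8Lattice where
  span_top := by
    rw [eq_top_iff, ← (EuclideanSpace.basisFun (Fin 8) ℝ).toBasis.span_eq, span_le]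
    rintro _ ⟨i, rfl⟩
    have hi := smul_mem _ (1 / 2 : ℝ) (subset_span (R := ℝ) (single_add_single_mem_e8Lattice i i))
    simpa [← two_smul ℝ, smul_smul] using hi

theorem covolume_e8Lattice : ZLattice.covolume e8Lattice = 1 :=
  covolume_eq_one_of_dualLattice_eq _ dualLattice_e8Lattice

end E8

section LinearProgrammingBound

open scoped ComplexOrder

theorem eq_zero_of_tsum_le_apply {ι M : Type*} [AddCommGroup M] [PartialOrder M]
    [IsOrderedAddMonoid M] [TopologicalSpace M] [OrderClosedTopology M] {f : ι → M} {i₀ : ι}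
    (hf : Summable f) (hpos : ∀ i ≠ i₀, 0 ≤ f i) (hle : ∑' i, f i ≤ f i₀) {i : ι} (hi : i ≠ i₀) :
    f i = 0 := by
  classical
  have hsum : f i₀ + f i ≤ f i₀ := by
    rw [← Finset.sum_pair hi.symm]
    exact (hf.sum_le_tsum _ fun j hj ↦ hpos j fun h ↦ hj (by simp [h])).trans hle
  exact ((add_le_iff_nonpos_right _).1 hsum).antisymm (hpos i hi)

theorem optimal_function_vanishes_on_E8_general {V : Type*} [NormedAddCommGroup V]
    [InnerProductSpace ℝ V] [FiniteDimensional ℝ V] [MeasurableSpace V] [BorelSpace V]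
    (L : Submodule ℤ V) [DiscreteTopology L] [IsZLattice ℝ L] {g : V → ℝ} {b : ℝ}
    (hg : Continuous g) (hb : (finrank ℝ V : ℝ) < b) (hgb : g =O[⊤] fun x ↦ (1 + ‖x‖) ^ (-b))
    (hsum : Summable fun y : dualLattice L ↦ 𝓕 (fun x ↦ (g x : ℂ)) y)
    (hneg : ∀ x ∈ L, x ≠ 0 → g x ≤ 0)
    (hpos : ∀ y ∈ dualLattice L, y ≠ 0 → 0 ≤ 𝓕 (fun x ↦ (g x : ℂ)) y)
    (hzero : (ZLattice.covolume L * g 0 : ℂ) ≤ 𝓕 (fun x ↦ (g x : ℂ)) 0) :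
    (∀ x ∈ L, x ≠ 0 → g x = 0) ∧ ∀ y ∈ dualLattice L, y ≠ 0 → 𝓕 (fun x ↦ (g x : ℂ)) y = 0 := by
  have hcov : 0 < ZLattice.covolume L := ZLattice.covolume_pos L
  have hsum_g : Summable fun x : L ↦ -g x :=
    (summable_of_isBigO_one_add_norm_rpow L hb hgb).neg
  have hneg (x : L) (hx : x ≠ 0) : 0 ≤ -g x := by simpa using hneg x x.2 (by simpa using hx)
  have hpos (y : dualLattice L) (hy : y ≠ 0) : 0 ≤ 𝓕 (fun x ↦ (g x : ℂ)) y :=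
    hpos y y.2 (by simpa using hy)
  have poisson : ∑' y : dualLattice L, 𝓕 (fun x ↦ (g x : ℂ)) y =
      (ZLattice.covolume L * ∑' x : L, g x : ℝ) := by
    push_cast
    exact tsum_fourier_dualLattice L (by fun_prop) hb (by simpa using! hgb.norm_left) hsum
  have hg_le : ∑' x : L, g x ≤ g 0 := by simpa [tsum_neg] using hsum_g.le_tsum 0 hneg
  have hle_fourier : 𝓕 (fun x ↦ (g x : ℂ)) 0 ≤ ∑' y : dualLattice L, 𝓕 (fun x ↦ (g x : ℂ)) y :=
    hsum.le_tsum 0 hpos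
  have hle_g : ZLattice.covolume L * g 0 ≤ ZLattice.covolume L * ∑' x : L, g x :=
    mod_cast hzero.trans (hle_fourier.trans_eq poisson)
  have hfourier_le : ∑' y : dualLattice L, 𝓕 (fun x ↦ (g x : ℂ)) y ≤ 𝓕 (fun x ↦ (g x : ℂ)) 0 :=
    poisson.trans_le (le_trans (mod_cast mul_le_mul_of_nonneg_left hg_le hcov.le) hzero)
  refine ⟨fun x hx hx₀ ↦ ?_, fun y hy hy₀ ↦ ?_⟩
  · refine neg_eq_zero.1 (eq_zero_of_tsum_le_apply (i₀ := 0) (i := ⟨x, hx⟩) hsum_g hneg ?_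
      (by simpa using hx₀))
    simpa [tsum_neg] using le_of_mul_le_mul_left hle_g hcov
  · exact eq_zero_of_tsum_le_apply (i₀ := 0) (i := ⟨y, hy⟩) hsum hpos hfourier_le
      (by simpa using hy₀)

end LinearProgrammingBound

/-- If `g : ℝ⁸ → ℝ` is a Schwartz function with `g(x) ≤ 0` for `‖x‖ ≥ √2`, `ĝ(x) ≥ 0` for all
`x ∈ ℝ⁸`, and `g(0) = ĝ(0) = 1`, then `g(ℓ) = 0` and `ĝ(ℓ) = 0` for every `ℓ ∈ Λ₈ \ {0}`. -/
theorem optimal_function_vanishes_on_E8 (g : SchwartzMap (EuclideanSpace ℝ (Fin 8)) ℝ)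
    (hg : ∀ x, Real.sqrt 2 ≤ ‖x‖ → g x ≤ 0)
    (hghat : ∀ x, ∃ c : ℝ, 0 ≤ c ∧ 𝓕 (fun y => (g y : ℂ)) x = c)
    (hg0 : g 0 = 1) (hghat0 : 𝓕 (fun y => (g y : ℂ)) 0 = 1) :
    ∀ ℓ ∈ Lambda8, ℓ ≠ 0 → g ℓ = 0 ∧ 𝓕 (fun y => (g y : ℂ)) ℓ = 0 := by
  have hvanish := optimal_function_vanishes_on_E8_general e8Lattice g.continuous
    (mod_cast Nat.lt_succ_self _) (schwartzMap_isBigO_one_add_norm_rpow g (finrank ℝ _ + 1))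
    (schwartzMap_summable_fourier_ofReal g _)
    (fun x hx hx₀ ↦ hg x (isEvenLattice_e8Lattice.sqrt_two_le_norm hx hx₀))
    (fun y _ _ ↦ by obtain ⟨c, hc, hy⟩ := hghat y; exact hy ▸ Complex.zero_le_real.2 hc)
    (by rw [covolume_e8Lattice, hg0, hghat0]; simp)
  rw [dualLattice_e8Lattice] at hvanish
  exact fun l hl hl₀ ↦ ⟨hvanish.1 l hl hl₀, hvanish.2 l hl hl₀⟩
end

section
/- For every z in the upper half-plane ℍ, φ0(−1/z) = φ0(z) − (12i/π)(1/z)·φ_{−2}(z) − (36/π²)(1/z²)·φ_{−4}(z). -/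
open MeasureTheory

/-- Weight 2 Eisenstein series (quasimodular), via its `q`-expansion. -/
noncomputable def E2 (z : ℂ) : ℂ :=
  1 - 24 * ∑' n : ℕ+, ((ArithmeticFunction.sigma 1 n : ℕ) : ℂ) *
    Complex.exp (2 * (Real.pi : ℂ) * Complex.I * n * z)

/-- Weight 4 Eisenstein series, via its `q`-expansion. -/
noncomputable def E4 (z : ℂ) : ℂ :=
  1 + 240 * ∑' n : ℕ+, ((ArithmeticFunction.sigma 3 n : ℕ) : ℂ) *
    Complex.exp (2 * (Real.pi : ℂ) * Complex.I * n * z)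

/-- Weight 6 Eisenstein series, via its `q`-expansion. -/
noncomputable def E6 (z : ℂ) : ℂ :=
  1 - 504 * ∑' n : ℕ+, ((ArithmeticFunction.sigma 5 n : ℕ) : ℂ) *
    Complex.exp (2 * (Real.pi : ℂ) * Complex.I * n * z)

/-- The elliptic `j`-invariant. -/
noncomputable def jInv (z : ℂ) : ℂ := 1728 * E4 z ^ 3 / (E4 z ^ 3 - E6 z ^ 2)

/-- The weakly holomorphic modular form `varphi_{-2}`. -/
noncomputable def varphim2 (z : ℂ) : ℂ := -1728 * E4 z * E6 z / (E4 z ^ 3 - E6 z ^ 2)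

/-- The weakly holomorphic modular form `varphi_{-4}`. -/
noncomputable def varphim4 (z : ℂ) : ℂ := 1728 * E4 z ^ 2 / (E4 z ^ 3 - E6 z ^ 2)

/-- `φ_{-4} = varphi_{-4}`. -/
noncomputable def phim4 (z : ℂ) : ℂ := varphim4 z

/-- `φ_{-2} = varphi_{-4}·E2 + varphi_{-2}`. -/
noncomputable def phim2 (z : ℂ) : ℂ := varphim4 z * E2 z + varphim2 z

/-- `φ_0 = varphi_{-4}·E2² + 2·varphi_{-2}·E2 + j − 1728`. -/
noncomputable def phi0 (z : ℂ) : ℂ :=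
  varphim4 z * E2 z ^ 2 + 2 * varphim2 z * E2 z + jInv z - 1728

/-!
`phi0 = varphim4·E2² + 2·varphim2·E2 + (jInv − 1728)` is a quadratic polynomial in `E2` whose
coefficients are modular of weights `−4`, `−2` and `0`. For `γ ∈ SL(2, ℤ)` with bottom row `(c, d)`,
the weight-2 slash action of `γ` translates `E2` by `−s`, where `s = 6ic / (π(cz + d))`. The
automorphy factors cancel, so `phi0 (γz)` is the same polynomial evaluated at `E2 z − s`. Its Taylor
expansion is `phi0 − 2s·phim2 + s²·phim4`, since `phim2` is half the derivative of the polynomial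
with respect to `E2`.
-/

section ModularTransformation

open Complex
open UpperHalfPlane hiding I
open scoped MatrixGroups Real

theorem bernoulli_four : bernoulli 4 = -1 / 30 := by
  norm_num [bernoulli]

theorem bernoulli_six : bernoulli 6 = 1 / 42 := by
  decide +kernel

theorem eisensteinSeries_eq_tsum_cexp {k : ℕ} (hk : 3 ≤ k) (hk_even : Even k) (z : ℍ) :
    ModularForm.E hk z = 1 - (2 * k / bernoulli k) *
      ∑' n : ℕ+, ((ArithmeticFunction.sigma (k - 1) n : ℕ) : ℂ) * cexp (2 * π * I * n * z) := by
  have cexp_zpow (n : ℕ+) : cexp (2 * π * I * z) ^ (n : ℤ) = cexp (2 * π * I * n * z) := by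
    rw [← Complex.exp_int_mul]
    push_cast
    ring_nf
  simp only [EisensteinSeries.q_expansion_bernoulli hk hk_even, cexp_zpow]

theorem E2_coe_eq (z : ℍ) : E2 z = EisensteinSeries.E2 z := by
  have cexp_pow (n : ℕ+) : cexp (2 * π * I * z) ^ (n : ℕ) = cexp (2 * π * I * n * z) := by
    rw [← Complex.exp_nat_mul]
    ring_nf
  simp only [E2, EisensteinSeries.E2_eq_tsum_cexp, cexp_pow]

theorem E4_coe_eq (z : ℍ) : E4 z = ModularForm.E₄ z := by
  norm_num [E4, eisensteinSeries_eq_tsum_cexp _ (show Even 4 by decide), bernoulli_four]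

theorem E6_coe_eq (z : ℍ) : E6 z = ModularForm.E₆ z := by
  norm_num [E6, eisensteinSeries_eq_tsum_cexp _ (show Even 6 by decide), bernoulli_six]

theorem levelOne_apply_smul {F : Type*} [FunLike F ℍ ℂ] {k : ℤ} [SlashInvariantFormClass F 𝒮ℒ k]
    (f : F) (γ : SL(2, ℤ)) (z : ℍ) : f (γ • z) = denom γ z ^ k * f z :=
  SlashInvariantForm.slash_action_eqn'' f (MonoidHom.mem_range.mpr ⟨γ, rfl⟩) z

variable (γ : SL(2, ℤ)) (z : ℍ)

theorem E2_smul :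
    E2 ↑(γ • z) = denom γ z ^ 2 * (E2 z - 6 * I / π * (γ 1 0 / denom γ z)) := by
  have h_denom : denom γ z ≠ 0 := denom_ne_zero γ z
  have h_pi : (π : ℂ) ≠ 0 := ofReal_ne_zero.mpr Real.pi_ne_zero
  have h_slash := congrFun (EisensteinSeries.E2_slash_action γ) z
  rw [ModularForm.SL_slash_apply] at h_slash
  simp only [Pi.sub_apply, Pi.smul_apply, smul_eq_mul, EisensteinSeries.D2, riemannZeta_two,
    ← E2_coe_eq] at h_slash
  field_simp at h_slash ⊢
  linear_combination h_slash

theorem E4_smul : E4 ↑(γ • z) = denom γ z ^ 4 * E4 z := by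
  rw [E4_coe_eq, E4_coe_eq, levelOne_apply_smul]
  norm_cast

theorem E6_smul : E6 ↑(γ • z) = denom γ z ^ 6 * E6 z := by
  rw [E6_coe_eq, E6_coe_eq, levelOne_apply_smul]
  norm_cast

theorem E4_cube_sub_E6_sq_smul :
    E4 ↑(γ • z) ^ 3 - E6 ↑(γ • z) ^ 2 = denom γ z ^ 12 * (E4 z ^ 3 - E6 z ^ 2) := by
  rw [E4_smul, E6_smul]
  ring

theorem jInv_smul : jInv ↑(γ • z) = jInv z := by
  have h_denom : denom γ z ^ 12 ≠ 0 := pow_ne_zero 12 (denom_ne_zero γ z)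
  rw [jInv, jInv, E4_cube_sub_E6_sq_smul, E4_smul,
    ← mul_div_mul_left _ (E4 z ^ 3 - E6 z ^ 2) h_denom]
  ring

theorem denom_sq_mul_varphim2_smul : denom γ z ^ 2 * varphim2 ↑(γ • z) = varphim2 z := by
  have h_denom : denom γ z ^ 12 ≠ 0 := pow_ne_zero 12 (denom_ne_zero γ z)
  rw [varphim2, varphim2, E4_cube_sub_E6_sq_smul, E4_smul, E6_smul,
    ← mul_div_mul_left _ (E4 z ^ 3 - E6 z ^ 2) h_denom]
  ring

theorem denom_pow_four_mul_varphim4_smul : denom γ z ^ 4 * varphim4 ↑(γ • z) = varphim4 z := by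
  have h_denom : denom γ z ^ 12 ≠ 0 := pow_ne_zero 12 (denom_ne_zero γ z)
  rw [varphim4, varphim4, E4_cube_sub_E6_sq_smul, E4_smul,
    ← mul_div_mul_left _ (E4 z ^ 3 - E6 z ^ 2) h_denom]
  ring

theorem phi0_transformation_general :
    phi0 ↑(γ • z) = phi0 z - 12 * I / π * (γ 1 0 / denom γ z) * phim2 z
      - 36 / π ^ 2 * (γ 1 0 / denom γ z) ^ 2 * phim4 z := by
  set s : ℂ := 6 * I / π * (γ 1 0 / denom γ z) with hs
  have h_E2 : E2 ↑(γ • z) = denom γ z ^ 2 * (E2 z - s) := E2_smul γ z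
  have h_sq : s ^ 2 = -(36 / π ^ 2 * (γ 1 0 / denom γ z) ^ 2) := by
    rw [hs, mul_pow, div_pow, mul_pow, I_sq]
    ring
  calc
    phi0 ↑(γ • z) = denom γ z ^ 4 * varphim4 ↑(γ • z) * (E2 z - s) ^ 2
        + 2 * (denom γ z ^ 2 * varphim2 ↑(γ • z)) * (E2 z - s) + jInv ↑(γ • z) - 1728 := by
      rw [phi0, h_E2]
      ring
    _ = varphim4 z * (E2 z - s) ^ 2 + 2 * varphim2 z * (E2 z - s) + jInv z - 1728 := by
      rw [denom_pow_four_mul_varphim4_smul, denom_sq_mul_varphim2_smul, jInv_smul]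
    _ = phi0 z - 2 * s * phim2 z + s ^ 2 * phim4 z := by
      rw [phi0, phim2, phim4]
      ring
    _ = phi0 z - 12 * I / π * (γ 1 0 / denom γ z) * phim2 z
        - 36 / π ^ 2 * (γ 1 0 / denom γ z) ^ 2 * phim4 z := by
      rw [h_sq, hs]
      ring

end ModularTransformation

/-- The transformation rule `φ₀(−1/z) = φ₀(z) − (12i/π)(1/z)·φ₋₂(z) − (36/π²)(1/z²)·φ₋₄(z)`
for all `z` in the upper half-plane. -/
theorem phi0_transformation (z : ℂ) (hz : 0 < z.im) :
    phi0 (-1/z) =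
      phi0 z - (12 * Complex.I / (Real.pi : ℂ)) * (1/z) * phim2 z
        - (36 / (Real.pi : ℂ) ^ 2) * (1/z^2) * phim4 z := by
  have h_S := phi0_transformation_general ModularGroup.S ⟨z, hz⟩
  rw [UpperHalfPlane.modular_S_smul, ModularGroup.denom_S] at h_S
  simpa [ModularGroup.S, neg_div, inv_neg] using h_S
end

section
/- For every r > √2, a(r) = −4 sin²(πr²/2) ∫_{0}^{i∞} φ0(−1/z) z² e^{πir²z} dz; equivalently, a(r) = 4i · sin²(πr²/2) ∫_{0}^{∞} φ0(i/t) t² e^{−πr²t} dt, and this integral converges absolutely for r > √2. -/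
open MeasureTheory

/-- Contour integral of `F` along the straight-line segment from `z₁` to `z₂`. -/
noncomputable def segInt (z₁ z₂ : ℂ) (F : ℂ → ℂ) : ℂ :=
  (z₂ - z₁) * ∫ t in (0:ℝ)..1, F (z₁ + (t : ℂ) * (z₂ - z₁))

/-- Contour integral of `F` along the vertical ray from `c·i` to `i∞`. -/
noncomputable def rayIntFrom (c : ℝ) (F : ℂ → ℂ) : ℂ :=
  Complex.I * ∫ t in Set.Ioi c, F (Complex.I * (t : ℂ))
/-- The radial profile of the `+1`-eigenfunction `a`: the value of `a` on vectors of norm `r`. -/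
noncomputable def aRad (r : ℝ) : ℂ :=
  segInt (-1) Complex.I
      (fun z => phi0 (-1/(z+1)) * (z+1)^2 * Complex.exp ((Real.pi:ℂ) * Complex.I * (r:ℂ)^2 * z))
    + segInt 1 Complex.I
      (fun z => phi0 (-1/(z-1)) * (z-1)^2 * Complex.exp ((Real.pi:ℂ) * Complex.I * (r:ℂ)^2 * z))
    - 2 * segInt 0 Complex.I
      (fun z => phi0 (-1/z) * z^2 * Complex.exp ((Real.pi:ℂ) * Complex.I * (r:ℂ)^2 * z))
    + 2 * rayIntFrom 1 (fun z => phi0 z * Complex.exp ((Real.pi:ℂ) * Complex.I * (r:ℂ)^2 * z))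

/-- The radial function `a : ℝ⁸ → ℂ`. -/
noncomputable def aFn (x : EuclideanSpace ℝ (Fin 8)) : ℂ := aRad ‖x‖

/-!
For `r > √2` the function `φ0(-1/z) z² e^{πir²z}` decays at `i∞` in the strip `|Re z| ≤ 1`, and it
is `O(|z|²)` at the vertex of the cone `|Re z| ≤ Im z`, since there `-1/z → i∞` and `φ0` vanishes at
the cusp. It is therefore holomorphic on this closed convex cone, vertex included, so the path from
`0` to `i ± 1` and then vertically to `i∞` can be replaced by the imaginary axis. Translation by
`±1` turns the first two integrals of `a(r)` into such paths, at the cost of the factors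
`e^{∓πir²}`. The missing vertical pieces are supplied by the last integral of `a(r)`: since
`φ0(-1/z) z²` is a quadratic polynomial in `z` with `1`-periodic coefficients and leading
coefficient `φ0`, its second difference is `2 φ0`. Altogether `a(r)` is
`e^{πir²} + e^{-πir²} - 2 = -4 sin²(πr²/2)` times the integral over the imaginary axis.
-/

open UpperHalfPlane hiding I im
open Complex Filter Topology Asymptotics Set
open scoped Real MatrixGroups Manifold ModularForm

section EisensteinSeries

/-- The `q`-series `∑_{n ≥ 1} aₙ e^{2πinz}` without constant term, the shape shared by `E2 - 1`,
`E4 - 1` and `E6 - 1`. -/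
noncomputable def qSeries (a : ℕ+ → ℂ) (z : ℂ) : ℂ :=
  ∑' n : ℕ+, a n * cexp (2 * (π : ℂ) * I * n * z)

lemma qSeries_add_one (a : ℕ+ → ℂ) (z : ℂ) : qSeries a (z + 1) = qSeries a z := by
  refine tsum_congr fun n => congrArg (a n * ·) ?_
  exact Complex.exp_eq_exp_iff_exists_int.mpr ⟨n, by push_cast; ring⟩

lemma qSeries_eq_tsum_pow (a : ℕ+ → ℂ) (z : ℂ) :
    qSeries a z = ∑' n : ℕ+, a n * cexp (2 * (π : ℂ) * I * z) ^ (n : ℕ) := by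
  refine tsum_congr fun n => ?_
  rw [← Complex.exp_nat_mul]
  ring_nf

lemma qSeries_isBigO {a : ℕ+ → ℂ} {z₀ : ℂ}
    (ha : Summable fun n : ℕ+ => a n * cexp (2 * (π : ℂ) * I * n * z₀)) :
    qSeries a =O[comap im atTop] fun z => rexp (-2 * π * z.im) := by
  have norm_term (n : ℕ+) (z : ℂ) : ‖a n * cexp (2 * (π : ℂ) * I * n * z)‖ =
      ‖a n‖ * rexp (-2 * π * n * z.im) := by
    simp [Complex.norm_exp]
  refine IsBigO.of_bound
    (rexp (2 * π * z₀.im) * ∑' n : ℕ+, ‖a n * cexp (2 * (π : ℂ) * I * n * z₀)‖) ?_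
  filter_upwards [preimage_mem_comap (Ici_mem_atTop z₀.im)] with z (hz : z₀.im ≤ z.im)
  have term_le (n : ℕ+) : ‖a n * cexp (2 * (π : ℂ) * I * n * z)‖ ≤
      rexp (2 * π * z₀.im) * rexp (-2 * π * z.im) *
        ‖a n * cexp (2 * (π : ℂ) * I * n * z₀)‖ := by
    have hn : (1 : ℝ) ≤ n := mod_cast n.pos
    rw [norm_term, norm_term, mul_left_comm, ← Real.exp_add, ← Real.exp_add]
    gcongr
    nlinarith [mul_nonneg (mul_nonneg Real.pi_pos.le (sub_nonneg.mpr hn)) (sub_nonneg.mpr hz)]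
  calc ‖qSeries a z‖ ≤ rexp (2 * π * z₀.im) * rexp (-2 * π * z.im) *
        ∑' n : ℕ+, ‖a n * cexp (2 * (π : ℂ) * I * n * z₀)‖ :=
        tsum_of_norm_bounded (ha.norm.hasSum.mul_left _) term_le
    _ = _ := by rw [Real.norm_of_nonneg (Real.exp_pos _).le]; ring

lemma qSeries_sigma_isBigO (k : ℕ) :
    qSeries (fun n => (ArithmeticFunction.sigma k n : ℕ)) =O[comap im atTop]
      fun z => rexp (-2 * π * z.im) := by
  refine qSeries_isBigO (z₀ := UpperHalfPlane.I) ?_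
  refine ((EisensteinSeries.summable_sigma_mul_cexp_pow (Nat.le_add_left 1 k)
    UpperHalfPlane.I).comp_injective PNat.coe_injective).congr fun n => ?_
  simp only [Function.comp_apply, Nat.add_sub_cancel, ← Complex.exp_nat_mul]
  ring_nf

lemma E2_eq_qSeries (z : ℂ) :
    E2 z = 1 - 24 * qSeries (fun n => (ArithmeticFunction.sigma 1 n : ℕ)) z := rfl

lemma E4_eq_qSeries (z : ℂ) :
    E4 z = 1 + 240 * qSeries (fun n => (ArithmeticFunction.sigma 3 n : ℕ)) z := rfl

lemma E6_eq_qSeries (z : ℂ) :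
    E6 z = 1 - 504 * qSeries (fun n => (ArithmeticFunction.sigma 5 n : ℕ)) z := rfl

lemma E2_add_one (z : ℂ) : E2 (z + 1) = E2 z := by simp only [E2_eq_qSeries, qSeries_add_one]

lemma E4_add_one (z : ℂ) : E4 (z + 1) = E4 z := by simp only [E4_eq_qSeries, qSeries_add_one]

lemma E6_add_one (z : ℂ) : E6 (z + 1) = E6 z := by simp only [E6_eq_qSeries, qSeries_add_one]

lemma E2_coe (τ : ℍ) : E2 τ = EisensteinSeries.E2 τ := by
  rw [EisensteinSeries.E2_eq_tsum_cexp, E2_eq_qSeries, qSeries_eq_tsum_pow]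

lemma E4_coe (τ : ℍ) : E4 τ = ModularForm.E₄ τ := by
  have bernoulli_four : bernoulli 4 = -1 / 30 := by decide +kernel
  rw [EisensteinSeries.q_expansion_bernoulli _ ⟨2, rfl⟩, E4_eq_qSeries, qSeries_eq_tsum_pow,
    bernoulli_four]
  norm_num

lemma E6_coe (τ : ℍ) : E6 τ = ModularForm.E₆ τ := by
  have bernoulli_six : bernoulli 6 = 1 / 42 := by decide +kernel
  rw [EisensteinSeries.q_expansion_bernoulli _ ⟨3, rfl⟩, E6_eq_qSeries, qSeries_eq_tsum_pow,
    bernoulli_six]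
  norm_num

lemma E4_cube_sub_E6_sq_coe (τ : ℍ) :
    E4 τ ^ 3 - E6 τ ^ 2 = 1728 * ModularForm.discriminant τ := by
  rw [ModularForm.discriminant_eq_E₄_cube_sub_E₆_sq, E4_coe, E6_coe]
  ring

lemma E4_cube_sub_E6_sq_ne_zero {z : ℂ} (hz : 0 < z.im) : E4 z ^ 3 - E6 z ^ 2 ≠ 0 := by
  lift z to ℍ using hz
  rw [E4_cube_sub_E6_sq_coe]
  exact mul_ne_zero (by norm_num) (ModularForm.discriminant_ne_zero z)

lemma differentiableOn_of_coe_eq {f : ℂ → ℂ} {g : ℍ → ℂ} (hfg : ∀ τ : ℍ, f τ = g τ)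
    (hg : MDiff g) : DifferentiableOn ℂ f {z | 0 < z.im} := by
  refine (UpperHalfPlane.mdifferentiable_iff.mp hg).congr fun z hz => ?_
  rw [Function.comp_apply, ofComplex_apply_of_im_pos hz, ← hfg]

lemma differentiableOn_E2 : DifferentiableOn ℂ E2 {z | 0 < z.im} :=
  differentiableOn_of_coe_eq E2_coe E2_mdifferentiable

lemma differentiableOn_E4 : DifferentiableOn ℂ E4 {z | 0 < z.im} :=
  differentiableOn_of_coe_eq E4_coe ModularForm.E₄.holo'

lemma differentiableOn_E6 : DifferentiableOn ℂ E6 {z | 0 < z.im} :=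
  differentiableOn_of_coe_eq E6_coe ModularForm.E₆.holo'

lemma modularForm_apply_inv_neg {k : ℤ} (f : ModularForm 𝒮ℒ k) (τ : ℍ) :
    f (.mk _ τ.im_inv_neg_coe_pos) = (τ : ℂ) ^ k * f τ := by
  have hslash : ⇑f ∣[k] ModularGroup.S = f :=
    SlashInvariantForm.slash_action_eqn f _ ⟨ModularGroup.S, rfl⟩
  have h := SlashInvariantForm.slash_S_apply f k τ
  rw [hslash, zpow_neg] at h
  rw [h, mul_left_comm, mul_inv_cancel₀ (zpow_ne_zero k τ.ne_zero), mul_one]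

lemma E4_neg_one_div {z : ℂ} (hz : 0 < z.im) : E4 (-1 / z) = z ^ 4 * E4 z := by
  lift z to ℍ using hz
  have h := modularForm_apply_inv_neg ModularForm.E₄ z
  rwa [← E4_coe, ← E4_coe, coe_mk, inv_neg, ← one_div, ← neg_div] at h

lemma E6_neg_one_div {z : ℂ} (hz : 0 < z.im) : E6 (-1 / z) = z ^ 6 * E6 z := by
  lift z to ℍ using hz
  have h := modularForm_apply_inv_neg ModularForm.E₆ z
  rwa [← E6_coe, ← E6_coe, coe_mk, inv_neg, ← one_div, ← neg_div] at h

lemma E2_neg_one_div {z : ℂ} (hz : 0 < z.im) :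
    E2 (-1 / z) = z ^ 2 * E2 z - 6 * I / π * z := by
  lift z to ℍ using hz
  have hz₀ : (z : ℂ) ≠ 0 := z.ne_zero
  have hπ : (π : ℂ) ≠ 0 := mod_cast Real.pi_ne_zero
  have h := SlashInvariantForm.slash_S_apply EisensteinSeries.E2 2 z
  rw [EisensteinSeries.E2_slash_action, ← E2_coe, coe_mk, inv_neg, ← one_div, ← neg_div] at h
  simp only [Pi.sub_apply, Pi.smul_apply, EisensteinSeries.D2_S, ← E2_coe, riemannZeta_two,
    smul_eq_mul, zpow_neg] at h
  rw [eq_mul_inv_iff_mul_eq₀ (zpow_ne_zero 2 hz₀)] at h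
  rw [← h, zpow_ofNat]
  field_simp

end EisensteinSeries

section WeightZero

variable {z : ℂ}

lemma phi0_eq (hz : 0 < z.im) :
    phi0 z = 1728 * (E2 z * E4 z - E6 z) ^ 2 / (E4 z ^ 3 - E6 z ^ 2) := by
  have hΔ := E4_cube_sub_E6_sq_ne_zero hz
  rw [phi0, varphim4, varphim2, jInv]
  field_simp
  ring

lemma phim2_eq (z : ℂ) :
    phim2 z = 1728 * (E4 z * (E2 z * E4 z - E6 z)) / (E4 z ^ 3 - E6 z ^ 2) := by
  rw [phim2, varphim4, varphim2]
  ring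

lemma phi0_add_one (z : ℂ) : phi0 (z + 1) = phi0 z := by
  simp only [phi0, varphim4, varphim2, jInv, E2_add_one, E4_add_one, E6_add_one]

lemma phim2_add_one (z : ℂ) : phim2 (z + 1) = phim2 z := by
  simp only [phim2, varphim4, varphim2, E2_add_one, E4_add_one, E6_add_one]

lemma phim4_add_one (z : ℂ) : phim4 (z + 1) = phim4 z := by
  simp only [phim4, varphim4, E4_add_one, E6_add_one]

lemma differentiableOn_phi0 : DifferentiableOn ℂ phi0 {z | 0 < z.im} := by
  have hE4 := differentiableOn_E4
  have hE6 := differentiableOn_E6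
  refine DifferentiableOn.congr ?_ fun z hz => phi0_eq hz
  exact ((((differentiableOn_E2.mul hE4).sub hE6).pow 2).const_mul 1728).div
    ((hE4.pow 3).sub (hE6.pow 2)) fun z hz => E4_cube_sub_E6_sq_ne_zero hz

lemma im_neg_one_div_pos (hz : 0 < z.im) : 0 < (-1 / z).im := by
  have h := im_inv_neg_coe_pos ⟨z, hz⟩
  rwa [coe_mk, inv_neg, ← one_div, ← neg_div] at h

lemma phi0_neg_one_div (hz : 0 < z.im) :
    phi0 (-1 / z) * z ^ 2 =
      phi0 z * z ^ 2 - 12 * I / π * phim2 z * z - 36 / π ^ 2 * phim4 z := by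
  have hz₀ : z ≠ 0 := fun h => by simp [h] at hz
  have hΔ := E4_cube_sub_E6_sq_ne_zero hz
  have hπ : (π : ℂ) ≠ 0 := mod_cast Real.pi_ne_zero
  have hden : (z ^ 4 * E4 z) ^ 3 - (z ^ 6 * E6 z) ^ 2 = z ^ 12 * (E4 z ^ 3 - E6 z ^ 2) := by ring
  have hnum : (z ^ 2 * E2 z - 6 * I / π * z) * (z ^ 4 * E4 z) - z ^ 6 * E6 z =
      z ^ 5 * (z * (E2 z * E4 z - E6 z) - 6 * I / π * E4 z) := by ring
  rw [phi0_eq (im_neg_one_div_pos hz), phi0_eq hz, phim2_eq, phim4, varphim4, E2_neg_one_div hz,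
    E4_neg_one_div hz, E6_neg_one_div hz, hden, hnum]
  field_simp
  linear_combination 36 * E4 z ^ 2 * I_sq

lemma phi0_neg_one_div_second_difference (hz : 0 < z.im) :
    phi0 (-1 / (z + 1)) * (z + 1) ^ 2 + phi0 (-1 / (z - 1)) * (z - 1) ^ 2
      - 2 * (phi0 (-1 / z) * z ^ 2) = 2 * phi0 z := by
  have sub_one {f : ℂ → ℂ} (hf : ∀ w, f (w + 1) = f w) : f (z - 1) = f z := by
    rw [← hf, sub_add_cancel]
  rw [phi0_neg_one_div hz, phi0_neg_one_div (z := z + 1) (by simpa using hz),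
    phi0_neg_one_div (z := z - 1) (by simpa using hz), phi0_add_one, phim2_add_one, phim4_add_one,
    sub_one phi0_add_one, sub_one phim2_add_one, sub_one phim4_add_one]
  ring

end WeightZero

section Growth

lemma tendsto_exp_neg_mul_im {b : ℝ} (hb : 0 < b) :
    Tendsto (fun z : ℂ => rexp (-b * z.im)) (comap im atTop) (𝓝 0) :=
  Real.tendsto_exp_atBot.comp (tendsto_comap.const_mul_atTop_of_neg (neg_neg_of_pos hb))

lemma exp_neg_two_pi_im_isBigO_one :
    (fun z : ℂ => rexp (-2 * π * z.im)) =O[comap im atTop] fun _ => (1 : ℝ) := by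
  simpa only [neg_mul] using (tendsto_exp_neg_mul_im Real.two_pi_pos).isBigO_one ℝ

lemma E2_sub_one_isBigO :
    (fun z => E2 z - 1) =O[comap im atTop] fun z => rexp (-2 * π * z.im) :=
  ((qSeries_sigma_isBigO 1).const_mul_left (-24)).congr_left fun z => by rw [E2_eq_qSeries]; ring

lemma E4_sub_one_isBigO :
    (fun z => E4 z - 1) =O[comap im atTop] fun z => rexp (-2 * π * z.im) :=
  ((qSeries_sigma_isBigO 3).const_mul_left 240).congr_left fun z => by rw [E4_eq_qSeries]; ring

lemma E6_sub_one_isBigO :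
    (fun z => E6 z - 1) =O[comap im atTop] fun z => rexp (-2 * π * z.im) :=
  ((qSeries_sigma_isBigO 5).const_mul_left (-504)).congr_left fun z => by rw [E6_eq_qSeries]; ring

lemma E4_isBigO_one : E4 =O[comap im atTop] fun _ => (1 : ℝ) :=
  ((E4_sub_one_isBigO.trans exp_neg_two_pi_im_isBigO_one).add
    (isBigO_const_const (1 : ℂ) one_ne_zero _)).congr_left fun z => sub_add_cancel (E4 z) 1

lemma E2_mul_E4_sub_E6_isBigO :
    (fun z => E2 z * E4 z - E6 z) =O[comap im atTop] fun z => rexp (-2 * π * z.im) := by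
  have hE2 := (E2_sub_one_isBigO.mul E4_isBigO_one).congr_right fun z => mul_one _
  refine ((hE2.add E4_sub_one_isBigO).sub E6_sub_one_isBigO).congr_left fun z => ?_
  ring

lemma inv_E4_cube_sub_E6_sq_isBigO :
    (fun z => (E4 z ^ 3 - E6 z ^ 2)⁻¹) =O[comap im atTop] fun z => rexp (2 * π * z.im) := by
  have hΔ : (fun z : ℂ => rexp (-2 * π * z.im)) =O[comap im atTop]
      fun z => E4 z ^ 3 - E6 z ^ 2 := by
    refine ((ModularForm.exp_isBigO_discriminant.comp_tendsto
      tendsto_comap_im_ofComplex).const_mul_right (c := 1728) (by norm_num)).congr' ?_ ?_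
    all_goals
      filter_upwards [preimage_mem_comap (Ioi_mem_atTop 0)] with z (hz : 0 < z.im)
      lift z to ℍ using hz
    · simp only [Function.comp_apply, ofComplex_apply, coe_im]
    · rw [Function.comp_apply, ofComplex_apply, E4_cube_sub_E6_sq_coe]
  refine (hΔ.inv_rev (.of_forall fun z h => absurd h (Real.exp_ne_zero _))).congr_right fun z => ?_
  rw [← Real.exp_neg]
  ring_nf

lemma phi0_isBigO : phi0 =O[comap im atTop] fun z => rexp (-2 * π * z.im) := by
  refine (((E2_mul_E4_sub_E6_isBigO.pow 2).const_mul_left 1728).mul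
    inv_E4_cube_sub_E6_sq_isBigO).congr' ?_ (.of_forall fun z => ?_)
  · filter_upwards [preimage_mem_comap (Ioi_mem_atTop 0)] with z hz
    rw [phi0_eq hz, div_eq_mul_inv]
  · simp only [← Real.exp_nat_mul, ← Real.exp_add]
    ring_nf

lemma phim2_isBigO : phim2 =O[comap im atTop] fun _ => (1 : ℝ) := by
  refine (((E4_isBigO_one.mul E2_mul_E4_sub_E6_isBigO).const_mul_left 1728).mul
    inv_E4_cube_sub_E6_sq_isBigO).congr (fun z => ?_) fun z => ?_
  · rw [phim2_eq, div_eq_mul_inv]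
  · rw [one_mul, ← Real.exp_add, ← add_mul, neg_mul, neg_add_cancel, zero_mul, Real.exp_zero]

lemma phim4_isBigO : phim4 =O[comap im atTop] fun z => rexp (2 * π * z.im) := by
  refine (((E4_isBigO_one.pow 2).const_mul_left 1728).mul
    inv_E4_cube_sub_E6_sq_isBigO).congr (fun z => ?_) fun z => ?_
  · rw [phim4, varphim4, div_eq_mul_inv]
  · rw [one_pow, one_mul]

lemma phi0_neg_one_div_mul_sq_isBigO :
    (fun z => phi0 (-1 / z) * z ^ 2) =O[comap im atTop]
      fun z => rexp (2 * π * z.im) * ‖z‖ ^ 2 := by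
  have im_ge (c : ℝ) : ∀ᶠ z in comap im atTop, c ≤ z.im :=
    preimage_mem_comap (Ici_mem_atTop c)
  have one_isBigO_exp : (fun _ => (1 : ℝ)) =O[comap im atTop] fun z => rexp (2 * π * z.im) := by
    refine .of_norm_eventuallyLE ?_
    filter_upwards [im_ge 0] with z hz
    rw [norm_one]
    exact Real.one_le_exp (by positivity)
  have pow_isBigO {k : ℕ} (hk : k ≤ 2) :
      (fun z : ℂ => z ^ k) =O[comap im atTop] fun z => ‖z‖ ^ 2 := by
    refine .of_norm_eventuallyLE ?_
    filter_upwards [im_ge 1] with z hz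
    rw [norm_pow]
    exact pow_le_pow_right₀ (hz.trans (im_le_norm z)) hk
  have h0 := ((phi0_isBigO.trans exp_neg_two_pi_im_isBigO_one).trans one_isBigO_exp).mul
    (pow_isBigO le_rfl)
  have h2 := ((phim2_isBigO.trans one_isBigO_exp).mul (pow_isBigO one_le_two)).const_mul_left
    (12 * I / π)
  have h4 := (phim4_isBigO.mul (pow_isBigO zero_le_two)).const_mul_left (36 / π ^ 2 : ℂ)
  refine ((h0.sub h2).sub h4).congr' ?_ .rfl
  filter_upwards [preimage_mem_comap (Ioi_mem_atTop 0)] with z hz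
  rw [phi0_neg_one_div hz]
  ring

end Growth

section Integrand

variable {r : ℝ}

/-- The function `φ0(-1/z) z² e^{πir²z}` whose integral over `(0, i∞)` computes `a(r)`. -/
noncomputable def contourIntegrand (r : ℝ) (z : ℂ) : ℂ :=
  phi0 (-1 / z) * z ^ 2 * cexp ((π : ℂ) * I * (r : ℂ) ^ 2 * z)

/-- The closed cone `|Re z| ≤ Im z`. It contains all the shifted contours, and `-1/z` tends to
`i∞` when `z` tends to the vertex `0` inside it. -/
def upperCone : Set ℂ := {z | |z.re| ≤ z.im}

/-- The filter of neighbourhoods of `i∞` in the strip `|Re z| ≤ 1`. -/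
def atIInftyStrip : Filter ℂ := comap im atTop ⊓ 𝓟 {z | |z.re| ≤ 1}

lemma mem_upperCone {z : ℂ} : z ∈ upperCone ↔ |z.re| ≤ z.im := Iff.rfl

lemma I_mul_add_mem_upperCone {x t : ℝ} (ht : |x| ≤ t) : I * t + x ∈ upperCone := by
  simpa [mem_upperCone] using ht

lemma convex_upperCone : Convex ℝ upperCone := by
  intro z hz w hw a b ha hb _
  rw [mem_upperCone] at hz hw
  simp only [mem_upperCone, add_re, add_im, real_smul, re_ofReal_mul, im_ofReal_mul]
  calc |a * z.re + b * w.re| ≤ a * |z.re| + b * |w.re| := by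
        simpa only [abs_mul, abs_of_nonneg ha, abs_of_nonneg hb] using
          abs_add_le (a * z.re) (b * w.re)
    _ ≤ a * z.im + b * w.im := by gcongr

lemma im_pos_of_mem_upperCone {z : ℂ} (hz : z ∈ upperCone) (hz₀ : z ≠ 0) : 0 < z.im := by
  have hre : |z.re| ≤ z.im := hz
  refine lt_of_le_of_ne ((abs_nonneg _).trans hre) fun him => hz₀ (Complex.ext ?_ him.symm)
  exact abs_nonpos_iff.mp (him ▸ hre)

lemma tendsto_neg_one_div_nhdsWithin_upperCone :
    Tendsto (fun z => -1 / z) (𝓝[upperCone \ {0}] 0) (comap im atTop) := by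
  have inv_norm_atTop : Tendsto (fun z : ℂ => ‖z‖⁻¹ / 2) (𝓝[upperCone \ {0}] 0) atTop :=
    ((tendsto_norm_inv_nhdsNE_zero_atTop.congr norm_inv).mono_left
      (nhdsWithin_mono 0 fun z hz => hz.2)).atTop_div_const two_pos
  refine tendsto_comap_iff.mpr (tendsto_atTop_mono' _ ?_ inv_norm_atTop)
  filter_upwards [self_mem_nhdsWithin] with z ⟨hz, hz₀⟩
  have him := im_pos_of_mem_upperCone hz hz₀
  have hnorm : ‖z‖ ≤ 2 * z.im := by
    linarith [norm_le_abs_re_add_abs_im z, mem_upperCone.mp hz, abs_of_pos him]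
  have norm_pos : 0 < ‖z‖ := norm_pos_iff.mpr hz₀
  calc ‖z‖⁻¹ / 2 = ‖z‖ / (2 * ‖z‖ ^ 2) := by field_simp
    _ ≤ 2 * z.im / (2 * ‖z‖ ^ 2) := by gcongr
    _ = (-1 / z).im := by
      rw [neg_div, neg_im, one_div, inv_im, normSq_eq_norm_sq]
      field_simp

lemma norm_cexp_pi_I_sq_mul (r : ℝ) (z : ℂ) :
    ‖cexp ((π : ℂ) * I * (r : ℂ) ^ 2 * z)‖ = rexp (-(π * r ^ 2) * z.im) := by
  rw [Complex.norm_exp]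
  congr 1
  have real_factor : (π : ℂ) * I * (r : ℂ) ^ 2 * z = ((π * r ^ 2 : ℝ) : ℂ) * (I * z) := by
    push_cast; ring
  rw [real_factor, re_ofReal_mul, I_mul_re]
  ring

lemma hasDerivWithinAt_contourIntegrand_zero (r : ℝ) :
    HasDerivWithinAt (contourIntegrand r) 0 upperCone 0 := by
  have value_zero : contourIntegrand r 0 = 0 := by simp [contourIntegrand]
  rw [hasDerivWithinAt_iff_tendsto_slope]
  have hphi : (fun z => phi0 (-1 / z)) =O[𝓝[upperCone \ {0}] 0] fun _ => (1 : ℝ) :=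
    (phi0_isBigO.trans exp_neg_two_pi_im_isBigO_one).comp_tendsto
      tendsto_neg_one_div_nhdsWithin_upperCone
  have hrest : Tendsto (fun z : ℂ => z * cexp ((π : ℂ) * I * (r : ℂ) ^ 2 * z))
      (𝓝[upperCone \ {0}] 0) (𝓝 0) :=
    Tendsto.mono_left (Continuous.tendsto' (by fun_prop) _ _ (by simp)) nhdsWithin_le_nhds
  have hprod := (hphi.mul_isLittleO ((isLittleO_one_iff ℝ).mpr hrest)).congr_right
    fun _ => one_mul (1 : ℝ)
  refine ((isLittleO_one_iff ℝ).mp hprod).congr' ?_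
  filter_upwards [self_mem_nhdsWithin] with z ⟨_, hz₀⟩
  have hz : z ≠ 0 := hz₀
  rw [slope_def_field, value_zero, contourIntegrand]
  field_simp
  ring

lemma differentiableOn_contourIntegrand (r : ℝ) :
    DifferentiableOn ℂ (contourIntegrand r) upperCone := by
  intro z hz
  rcases eq_or_ne z 0 with rfl | hz₀
  · exact (hasDerivWithinAt_contourIntegrand_zero r).differentiableWithinAt
  have him := im_neg_one_div_pos (im_pos_of_mem_upperCone hz hz₀)
  have hphi : DifferentiableAt ℂ phi0 (-1 / z) :=
    differentiableOn_phi0.differentiableAt (isOpen_upperHalfPlaneSet.mem_nhds him)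
  have hcomp : DifferentiableAt ℂ (fun w => phi0 (-1 / w)) z :=
    hphi.comp z ((differentiableAt_const _).div differentiableAt_id hz₀)
  exact ((hcomp.mul (differentiableAt_id.pow 2)).mul (by fun_prop)).differentiableWithinAt

lemma norm_isBigO_im_atIInftyStrip : (fun z : ℂ => ‖z‖) =O[atIInftyStrip] im := by
  refine .of_bound 2 ?_
  filter_upwards [mem_inf_of_left (preimage_mem_comap (Ici_mem_atTop 1)),
    mem_inf_of_right (mem_principal_self _)] with z (him : 1 ≤ z.im) (hre : |z.re| ≤ 1)
  rw [norm_norm, Real.norm_eq_abs]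
  linarith [norm_le_abs_re_add_abs_im z, le_abs_self z.im]

/- The growth `e^{2π Im z}` of `φ0(-1/z)` is beaten by `|e^{πir²z}| = e^{-πr² Im z}`; this is where
`r > √2` enters. -/
lemma exists_contourIntegrand_isBigO (hr : 2 < r ^ 2) :
    ∃ b > 0, contourIntegrand r =O[atIInftyStrip] fun z => rexp (-b * z.im) := by
  have hb : 0 < π * (r ^ 2 - 2) / 2 := by
    have := Real.pi_pos
    have := sub_pos.mpr hr
    positivity
  refine ⟨_, hb, ?_⟩
  have hphi := phi0_neg_one_div_mul_sq_isBigO.mono (inf_le_left : atIInftyStrip ≤ _)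
  have hpow : (fun z : ℂ => ‖z‖ ^ 2) =O[atIInftyStrip]
      fun z => rexp (π * (r ^ 2 - 2) / 2 * z.im) :=
    (norm_isBigO_im_atIInftyStrip.pow 2).trans
      (((isLittleO_pow_exp_pos_mul_atTop 2 hb).isBigO.comp_tendsto tendsto_comap).mono inf_le_left)
  have hexp : (fun z => cexp ((π : ℂ) * I * (r : ℂ) ^ 2 * z)) =O[atIInftyStrip]
      fun z => rexp (-(π * r ^ 2) * z.im) :=
    .of_norm_eventuallyLE (.of_forall fun z => (norm_cexp_pi_I_sq_mul r z).le)
  refine ((hphi.trans ((isBigO_refl _ _).mul hpow)).mul hexp).congr_right fun z => ?_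
  rw [← Real.exp_add, ← Real.exp_add]
  ring_nf

end Integrand

section Contours

variable {F G : ℂ → ℂ} {s : Set ℂ} {u v w : ℂ}

lemma segInt_eq_sub {P : ℂ → ℂ} (hs : Convex ℝ s) (hF : ContinuousOn F s)
    (hP : ∀ z ∈ s, HasDerivWithinAt P (F z) s z) (hu : u ∈ s) (hv : v ∈ s) :
    segInt u v F = P v - P u := by
  have mem (t : ℝ) (ht : t ∈ Icc (0 : ℝ) 1) : u + t * (v - u) ∈ s := by
    simpa only [real_smul] using hs.add_smul_sub_mem hu hv ht
  have deriv_path (t : ℝ) : HasDerivAt (fun t : ℝ => u + (t : ℂ) * (v - u)) (v - u) t := by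
    simpa only [one_mul, ofReal_one, id] using
      ((hasDerivAt_id t).ofReal_comp.mul_const (v - u)).const_add u
  have deriv_comp (t : ℝ) (ht : t ∈ Icc (0 : ℝ) 1) :
      HasDerivWithinAt (fun t : ℝ => P (u + t * (v - u))) ((v - u) * F (u + t * (v - u)))
        (Icc 0 1) t :=
    (hP _ (mem t ht)).scomp t (deriv_path t).hasDerivWithinAt mem
  have cont : ContinuousOn (fun t : ℝ => (v - u) * F (u + t * (v - u))) (Icc 0 1) :=
    continuousOn_const.mul (hF.comp (by fun_prop) mem)
  rw [segInt, ← intervalIntegral.integral_const_mul,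
    intervalIntegral.integral_eq_sub_of_hasDerivAt_of_le zero_le_one
      (fun t ht => (deriv_comp t ht).continuousWithinAt)
      (fun t ht => (deriv_comp t (Ioo_subset_Icc_self ht)).hasDerivAt (Icc_mem_nhds ht.1 ht.2))
      (cont.intervalIntegrable_of_Icc zero_le_one)]
  simp only [ofReal_one, ofReal_zero, one_mul, zero_mul, add_zero, add_sub_cancel]

lemma segInt_add_segInt (hs : Convex ℝ s) (hF : DifferentiableOn ℂ F s) (hu : u ∈ s) (hv : v ∈ s)
    (hw : w ∈ s) : segInt u v F + segInt v w F = segInt u w F := by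
  obtain ⟨P, hP⟩ := hs.exists_forall_hasDerivWithinAt hF
  rw [segInt_eq_sub hs hF.continuousOn hP hu hv, segInt_eq_sub hs hF.continuousOn hP hv hw,
    segInt_eq_sub hs hF.continuousOn hP hu hw]
  ring

lemma segInt_const_mul (c u v : ℂ) (F : ℂ → ℂ) :
    segInt u v (fun z => c * F z) = c * segInt u v F := by
  rw [segInt, segInt, intervalIntegral.integral_const_mul, mul_left_comm]

lemma segInt_comp_add (c u v : ℂ) (F : ℂ → ℂ) :
    segInt u v (fun z => F (z + c)) = segInt (u + c) (v + c) F := by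
  simp only [segInt, add_sub_add_right_eq_sub, add_right_comm]

lemma norm_segInt_le {C : ℝ} (hF : ∀ z ∈ segment ℝ u v, ‖F z‖ ≤ C) :
    ‖segInt u v F‖ ≤ ‖v - u‖ * C := by
  have bound := intervalIntegral.norm_integral_le_of_norm_le_const (a := 0) (b := 1)
    (f := fun t : ℝ => F (u + t * (v - u))) (C := C) fun t ht => hF _ ?_
  · rw [segInt, norm_mul]
    gcongr
    simpa only [sub_zero, abs_one, mul_one] using bound
  · rw [uIoc_of_le zero_le_one] at ht
    rw [segment_eq_image']
    exact ⟨t, Ioc_subset_Icc_self ht, congrArg (u + ·) real_smul⟩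

lemma segInt_I_mul (a T : ℝ) (F : ℂ → ℂ) :
    segInt (I * a) (I * T) F = I * ∫ t in a..T, F (I * t) := by
  have path (t : ℝ) : I * a + t * (I * T - I * a) = I * ((a + (T - a) * t : ℝ) : ℂ) := by
    push_cast
    ring
  have subst := intervalIntegral.smul_integral_comp_add_mul (a := 0) (b := 1)
    (fun t : ℝ => F (I * t)) (T - a) a
  rw [mul_zero, add_zero, mul_one, add_sub_cancel, real_smul] at subst
  simp only [segInt, path]
  rw [← mul_sub, ← ofReal_sub, mul_assoc, subst]

lemma rayIntFrom_const_mul (a : ℝ) (c : ℂ) (F : ℂ → ℂ) :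
    rayIntFrom a (fun z => c * F z) = c * rayIntFrom a F := by
  rw [rayIntFrom, rayIntFrom, integral_const_mul, mul_left_comm]

lemma rayIntFrom_congr {a : ℝ} (h : ∀ t : ℝ, a < t → F (I * t) = G (I * t)) :
    rayIntFrom a F = rayIntFrom a G :=
  congrArg (I * ·) (setIntegral_congr_fun measurableSet_Ioi h)

lemma rayIntFrom_add {a : ℝ} (hF : IntegrableOn (fun t : ℝ => F (I * t)) (Ioi a))
    (hG : IntegrableOn (fun t : ℝ => G (I * t)) (Ioi a)) :
    rayIntFrom a (fun z => F z + G z) = rayIntFrom a F + rayIntFrom a G := by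
  rw [rayIntFrom, integral_add hF hG, mul_add, rayIntFrom, rayIntFrom]

lemma tendsto_segInt_rayIntFrom {a : ℝ} (hF : IntegrableOn (fun t : ℝ => F (I * t)) (Ioi a)) :
    Tendsto (fun T : ℝ => segInt (I * a) (I * T) F) atTop (𝓝 (rayIntFrom a F)) := by
  simp only [segInt_I_mul]
  exact (intervalIntegral_tendsto_integral_Ioi a hF tendsto_id).const_mul I

lemma segInt_add_rayIntFrom {a b : ℝ} (hs : Convex ℝ s) (hF : DifferentiableOn ℂ F s)
    (ha : ∀ t : ℝ, a ≤ t → I * t ∈ s) (hb : ∀ t : ℝ, b ≤ t → I * t + w ∈ s)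
    (ha_int : IntegrableOn (fun t : ℝ => F (I * t)) (Ioi a))
    (hb_int : IntegrableOn (fun t : ℝ => F (I * t + w)) (Ioi b))
    (horizontal : Tendsto (fun T : ℝ => segInt (I * T) (I * T + w) F) atTop (𝓝 0)) :
    segInt (I * a) (I * b + w) F + rayIntFrom b (fun z => F (z + w)) = rayIntFrom a F := by
  have shifted := (tendsto_segInt_rayIntFrom (F := fun z => F (z + w)) hb_int).const_add
    (segInt (I * a) (I * b + w) F)
  have straight := (tendsto_segInt_rayIntFrom ha_int).add horizontal
  rw [add_zero] at straight
  refine tendsto_nhds_unique (shifted.congr' ?_) straight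
  filter_upwards [eventually_ge_atTop a, eventually_ge_atTop b] with T haT hbT
  rw [segInt_comp_add, segInt_add_segInt hs hF (ha a le_rfl) (hb b le_rfl) (hb T hbT),
    segInt_add_segInt hs hF (ha a le_rfl) (ha T haT) (hb T hbT)]

lemma tendsto_segInt_horizontal {x : ℝ} (hx : |x| ≤ 1) (hF : Tendsto F atIInftyStrip (𝓝 0)) :
    Tendsto (fun T : ℝ => segInt (I * T) (I * T + x) F) atTop (𝓝 0) := by
  refine Metric.tendsto_nhds.mpr fun ε hε => ?_
  have small := Metric.tendsto_nhds.mp hF (ε / 2) (half_pos hε)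
  rw [atIInftyStrip, eventually_inf_principal, eventually_comap] at small
  filter_upwards [small] with T hT
  have bound : ‖segInt (I * T) (I * T + x) F‖ ≤ ‖I * T + x - I * T‖ * (ε / 2) := by
    refine norm_segInt_le fun z hz => ?_
    rw [segment_eq_image'] at hz
    obtain ⟨t, ht, rfl⟩ := hz
    rw [← dist_zero_right]
    refine (hT _ (by simp) ?_).le
    simpa [abs_mul, abs_of_nonneg ht.1] using mul_le_one₀ ht.2 (abs_nonneg x) hx
  rw [add_sub_cancel_left, norm_real, Real.norm_eq_abs] at bound
  rw [dist_zero_right]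
  nlinarith

lemma tendsto_vertical_atIInftyStrip {x : ℝ} (hx : |x| ≤ 1) :
    Tendsto (fun t : ℝ => I * t + x) atTop atIInftyStrip := by
  refine tendsto_inf.mpr ⟨tendsto_comap_iff.mpr ?_, tendsto_principal.mpr (.of_forall fun t => ?_)⟩
  · exact tendsto_id.congr fun t => by simp
  · simpa using hx

lemma integrableOn_vertical {x a b : ℝ} (hx : |x| ≤ 1) (hs : ∀ t : ℝ, a ≤ t → I * t + x ∈ s)
    (hF : ContinuousOn F s) (hb : 0 < b) (decay : F =O[atIInftyStrip] fun z => rexp (-b * z.im)) :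
    IntegrableOn (fun t : ℝ => F (I * t + x)) (Ioi a) := by
  have cont : ContinuousOn (fun t : ℝ => F (I * t + x)) (Ici a) := hF.comp (by fun_prop) hs
  refine (integrable_norm_iff
    ((cont.mono Ioi_subset_Ici_self).aestronglyMeasurable measurableSet_Ioi)).mp ?_
  refine integrable_of_isBigO_exp_neg hb cont.norm
    ((decay.comp_tendsto (tendsto_vertical_atIInftyStrip hx)).norm_left.congr_right fun t => ?_)
  simp

end Contours

section Assembly

variable {r : ℝ}

lemma contourIntegrand_I_mul (r t : ℝ) :
    contourIntegrand r (I * t) =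
      -(phi0 (I / t) * (t : ℂ) ^ 2 * cexp (-(π : ℂ) * (r : ℂ) ^ 2 * t)) := by
  have harg : -1 / (I * t) = I / t := by
    rw [← I_mul_I, mul_div_mul_left _ _ I_ne_zero]
  have hexp : (π : ℂ) * I * (r : ℂ) ^ 2 * (I * t) = -(π : ℂ) * (r : ℂ) ^ 2 * t := by
    linear_combination (π : ℂ) * (r : ℂ) ^ 2 * t * I_sq
  rw [contourIntegrand, harg, hexp, mul_pow, I_sq]
  ring

lemma integrableOn_contourIntegrand (hr : 2 < r ^ 2) {x a : ℝ} (hx : |x| ≤ 1) (ha : |x| ≤ a) :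
    IntegrableOn (fun t : ℝ => contourIntegrand r (I * t + x)) (Ioi a) := by
  obtain ⟨b, hb, decay⟩ := exists_contourIntegrand_isBigO hr
  exact integrableOn_vertical hx (fun t ht => I_mul_add_mem_upperCone (ha.trans ht))
    (differentiableOn_contourIntegrand r).continuousOn hb decay

lemma segInt_add_rayIntFrom_contourIntegrand (hr : 2 < r ^ 2) {x : ℝ} (hx : |x| ≤ 1) :
    segInt 0 (I + x) (contourIntegrand r) + rayIntFrom 1 (fun z => contourIntegrand r (z + x)) =
      rayIntFrom 0 (contourIntegrand r) := by
  obtain ⟨b, hb, decay⟩ := exists_contourIntegrand_isBigO hr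
  have vanishing : Tendsto (contourIntegrand r) atIInftyStrip (𝓝 0) :=
    decay.trans_tendsto ((tendsto_exp_neg_mul_im hb).mono_left inf_le_left)
  have straight := integrableOn_contourIntegrand hr (x := 0) (a := 0) (by simp) (by simp)
  simp only [ofReal_zero, add_zero] at straight
  have shift := segInt_add_rayIntFrom (a := 0) (b := 1) convex_upperCone
    (differentiableOn_contourIntegrand r)
    (fun t ht => by simpa using I_mul_add_mem_upperCone (x := 0) (by simpa using ht))
    (fun t ht => I_mul_add_mem_upperCone (hx.trans ht)) straight
    (integrableOn_contourIntegrand hr hx hx) (tendsto_segInt_horizontal hx vanishing)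
  simpa only [ofReal_zero, ofReal_one, mul_zero, mul_one] using shift

/-- The integrand `φ0(-1/(z+x)) (z+x)² e^{πir²z}` of the first three contour integrals in the
definition of `a(r)`, for `x = 1, -1, 0`. -/
noncomputable def shiftedIntegrand (r x : ℝ) (z : ℂ) : ℂ :=
  phi0 (-1 / (z + x)) * (z + x) ^ 2 * cexp ((π : ℂ) * I * (r : ℂ) ^ 2 * z)

lemma shiftedIntegrand_eq (r x : ℝ) (z : ℂ) :
    shiftedIntegrand r x z = cexp (-((π * r ^ 2 * x : ℝ) * I)) * contourIntegrand r (z + x) := by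
  rw [contourIntegrand, mul_left_comm, ← Complex.exp_add, shiftedIntegrand]
  push_cast
  ring_nf

lemma integrableOn_shiftedIntegrand (hr : 2 < r ^ 2) {x : ℝ} (hx : |x| ≤ 1) :
    IntegrableOn (fun t : ℝ => shiftedIntegrand r x (I * t)) (Ioi 1) := by
  simp only [shiftedIntegrand_eq]
  exact (integrableOn_contourIntegrand hr hx hx).const_mul _

lemma segInt_add_rayIntFrom_shiftedIntegrand (hr : 2 < r ^ 2) {x : ℝ} (hx : |x| ≤ 1) :
    segInt (-x) I (shiftedIntegrand r x) + rayIntFrom 1 (shiftedIntegrand r x) =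
      cexp (-((π * r ^ 2 * x : ℝ) * I)) * rayIntFrom 0 (contourIntegrand r) := by
  rw [← segInt_add_rayIntFrom_contourIntegrand hr hx, funext (shiftedIntegrand_eq r x),
    segInt_const_mul, rayIntFrom_const_mul, segInt_comp_add, neg_add_cancel, mul_add]

lemma two_mul_phi0_mul_cexp (r : ℝ) {z : ℂ} (hz : 0 < z.im) :
    2 * (phi0 z * cexp ((π : ℂ) * I * (r : ℂ) ^ 2 * z)) =
      shiftedIntegrand r 1 z + shiftedIntegrand r (-1) z + -2 * shiftedIntegrand r 0 z := by
  have h := phi0_neg_one_div_second_difference hz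
  simp only [shiftedIntegrand, ofReal_one, ofReal_neg, ofReal_zero, add_zero, ← sub_eq_add_neg]
  linear_combination -cexp ((π : ℂ) * I * (r : ℂ) ^ 2 * z) * h

lemma two_mul_rayIntFrom_phi0 (hr : 2 < r ^ 2) :
    2 * rayIntFrom 1 (fun z => phi0 z * cexp ((π : ℂ) * I * (r : ℂ) ^ 2 * z)) =
      rayIntFrom 1 (shiftedIntegrand r 1) + rayIntFrom 1 (shiftedIntegrand r (-1)) +
        -2 * rayIntFrom 1 (shiftedIntegrand r 0) := by
  have h1 := integrableOn_shiftedIntegrand hr (x := 1) (by simp)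
  have hneg := integrableOn_shiftedIntegrand hr (x := -1) (by simp)
  have h0 := (integrableOn_shiftedIntegrand hr (x := 0) (by simp)).const_mul (-2)
  rw [← rayIntFrom_const_mul, ← rayIntFrom_const_mul, ← rayIntFrom_add h1 hneg,
    ← rayIntFrom_add (G := fun z => -2 * shiftedIntegrand r 0 z) (h1.add hneg) h0]
  refine rayIntFrom_congr fun t ht => two_mul_phi0_mul_cexp r ?_
  simpa using one_pos.trans ht

lemma neg_four_mul_sin_half_sq (θ : ℝ) :
    -4 * (Real.sin (θ / 2) : ℂ) ^ 2 = cexp (-(θ * I)) + cexp (θ * I) - 2 := by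
  have half : (θ : ℂ) = 2 * (θ / 2 : ℝ) := by push_cast; ring
  rw [← neg_mul, add_comm, ← Complex.two_cos, half, Complex.cos_two_mul, Complex.cos_sq']
  push_cast
  ring

lemma aRad_eq_shiftedIntegrand (r : ℝ) :
    aRad r = segInt (-1) I (shiftedIntegrand r 1) + segInt 1 I (shiftedIntegrand r (-1)) -
      2 * segInt 0 I (shiftedIntegrand r 0) +
      2 * rayIntFrom 1 (fun z => phi0 z * cexp ((π : ℂ) * I * (r : ℂ) ^ 2 * z)) := by
  unfold aRad shiftedIntegrand
  simp only [ofReal_one, ofReal_neg, ofReal_zero, add_zero, ← sub_eq_add_neg]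

lemma aRad_eq_mul_rayIntFrom (hr : 2 < r ^ 2) :
    aRad r = -4 * (Real.sin (π * r ^ 2 / 2) : ℂ) ^ 2 * rayIntFrom 0 (contourIntegrand r) := by
  have h1 := segInt_add_rayIntFrom_shiftedIntegrand hr (x := 1) (by simp)
  have hneg := segInt_add_rayIntFrom_shiftedIntegrand hr (x := -1) (by simp)
  have h0 := segInt_add_rayIntFrom_shiftedIntegrand hr (x := 0) (by simp)
  simp only [ofReal_one, ofReal_neg, ofReal_zero, neg_neg, neg_zero, mul_one, mul_neg, mul_zero,
    neg_mul, zero_mul, Complex.exp_zero, one_mul] at h1 hneg h0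
  rw [aRad_eq_shiftedIntegrand, two_mul_rayIntFrom_phi0 hr, neg_four_mul_sin_half_sq]
  linear_combination h1 + hneg - 2 * h0

end Assembly

/-- **Proposition 2.** For `r > √2`,
`a(r) = −4 sin²(πr²/2) ∫_{0}^{i∞} φ₀(−1/z) z² e^{πir²z} dz`; equivalently
`a(r) = 4i sin²(πr²/2) ∫_{0}^{∞} φ₀(i/t) t² e^{−πr²t} dt`, the integral converging
absolutely. -/
theorem aRad_double_zeroes (r : ℝ) (hr : Real.sqrt 2 < r) :
    IntegrableOn
      (fun t : ℝ => phi0 (Complex.I / (t : ℂ)) * (t : ℂ) ^ 2 *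
        Complex.exp (-(Real.pi : ℂ) * (r : ℂ) ^ 2 * (t : ℂ))) (Set.Ioi 0) ∧
    aRad r = -4 * ((Real.sin (Real.pi * r ^ 2 / 2) : ℂ)) ^ 2 *
      rayIntFrom 0 (fun z => phi0 (-1/z) * z ^ 2 *
        Complex.exp ((Real.pi : ℂ) * Complex.I * (r : ℂ) ^ 2 * z)) ∧
    aRad r = 4 * Complex.I * ((Real.sin (Real.pi * r ^ 2 / 2) : ℂ)) ^ 2 *
      ∫ t in Set.Ioi (0 : ℝ), phi0 (Complex.I / (t : ℂ)) * (t : ℂ) ^ 2 *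
        Complex.exp (-(Real.pi : ℂ) * (r : ℂ) ^ 2 * (t : ℂ)) := by
  have hr2 : 2 < r ^ 2 := Real.lt_sq_of_sqrt_lt hr
  have integral_eq := aRad_eq_mul_rayIntFrom hr2
  have integrable := (integrableOn_contourIntegrand hr2 (x := 0) (a := 0) (by simp) (by simp)).neg
  refine ⟨?_, integral_eq, ?_⟩
  · simpa only [ofReal_zero, add_zero, Pi.neg_def, contourIntegrand_I_mul, neg_neg] using integrable
  · rw [integral_eq, rayIntFrom]
    simp only [contourIntegrand_I_mul, integral_neg]
    ring
end
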